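/- Let d ≥ 3 be a fixed integer and p a prime with gcd(p,d) = 1. Let A be the adjacency matrix of a random d-regular directed graph on n vertices from the configuration model (i.e., A = A(𝒫) for a uniformly random permutation 𝒫 of {1,…,n}×{1,…,d}). Then limsup_{n→∞} P( A is singular as a matrix over F_p ) ≤ 1/(p−1); equivalently, #{𝒫 : det A(𝒫) ≡ 0 (mod p)} ≤ ((1+o(1))/(p−1))·(nd)! as n → ∞. -/

import Mathlib

/-!
A singular matrix over `F_p` has at least `p - 1` nonzero kernel vectors, so it suffices that the
expected number `∑ prob d v`, over `v ≠ 0`, of nonzero kernel vectors is `1 + o(1)`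
(`singular_le_sum_prob`, `exists_error_bound`). The random configuration `P` kills `v` when the labeling
`z ↦ v (P z).1` of the `n d` points, a uniformly random arrangement of `d` copies of `v`, has
zero sum on every fiber. Such arrangements are counted through the generating polynomial `gen` of the
zero-sum `d`-tuples: for every `x ≥ 0`, the number of `P` killing `v` is at most
`stab * gen d p x ^ n / (∏ i, x (v i)) ^ d` (`killers_mul_le`). The vectors `v` are split by their number
of nonzero coordinates `nz v` and by the chi-square distance `chi` of their frequencies `ν` from the
uniform distribution.

* `nz v ≤ ε n`: with `x` giving weight `√(k/n)` to each nonzero value, the vectors with `k` nonzero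
  coordinates contribute at most `(C √(k/n)) ^ k`, because a zero-sum tuple cannot have exactly one
  nonzero entry and `d ≥ 3` (`sum_region_sparse`).
* `nz v > ε n` and `chi` bounded below: with `x_j = ν_j ^ ((d - 1) / d)` one gets
  `prob d v ≤ poly(n) * wt v * rate ^ n`, where `wt v = exp (-n H(ν))` has polynomially bounded sum. The
  inequality between geometric and arithmetic means gives `rate ≤ 1`, and equality forces `ν` to be
  symmetric under two reflections whose composition is the translation by `d j` for some `j ≠ 0`. As
  `p` does not divide `d`, this makes `ν` uniform (`rate_lt_one`); compactness gives a uniform gap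
  (`exists_rate_bound`, `sum_region_dense`).
* `δ² < chi ≤ s`, for a small constant `s`: with `x = ν`, Fourier expansion of `gen` loses only
  `exp (O(n chi^(3/2)))`, against an entropy deficit of `exp (n chi / (4p))` (`sum_region_moderate`).
* `chi ≤ δ²`: by Fourier inversion `p ^ n * prob d v` is the average over `P` of
  `∑ u, ψ (⟨u, A(P) v⟩)`. The constant vectors `u` give `p` when `v` has sum zero and `0` otherwise (again
  because `p` does not divide `d`), which amounts to `1` in `∑ prob d v`. Up to adding
  a constant vector, any other `u` has a proportion at least `1/p` of zeros. If `u` has few nonzero coordinates, its exponential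
  sum is bounded by sampling without replacement (`sampling_bound`); if it has many, by Parseval and
  the smallness of `wt u` (`char_perm_sq_le`, `charSum_dense_le`). Hence `sum_region_uniform`.
-/

/-- `phi a j` is the number of coordinates of the tuple `a` equal to `j`
(the `j`-th coordinate of the counting vector `Φ(a)`). -/
noncomputable def phi {p k : ℕ} (a : Fin k → ZMod p) (j : ZMod p) : ℕ :=
  Nat.card {i : Fin k // a i = j}

/-- The adjacency matrix of the `d`-regular directed multigraph on `n` vertices
associated to a permutation `P` of the `n·d` points of the configuration model:
`A(P)_{kℓ} = #{k' ∈ F_k : P(k') ∈ F_ℓ}`. -/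
noncomputable def adjMat (n d : ℕ) (P : Equiv.Perm (Fin n × Fin d)) :
    Matrix (Fin n) (Fin n) ℤ :=
  Matrix.of fun k l => (Nat.card {k' : Fin d // (P (k, k')).1 = l} : ℤ)

/-- `T_{d,p}`, the set of `d`-tuples over `F_p` summing to zero. -/
def Tset (d p : ℕ) [NeZero p] : Finset (Fin d → ZMod p) :=
  Finset.univ.filter (fun a => ∑ i, a i = 0)

/-! ### Permutations and value counts -/

open Finset

/-- The number of times the function `f` takes the value `j`. -/
def cnt {p : ℕ} {ι : Type*} [Fintype ι] (f : ι → ZMod p) (j : ZMod p) : ℕ :=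
  (univ.filter fun i => f i = j).card

/-- The order `∏ j, (cnt f j)!` of the group of permutations `P` with `f ∘ P = f`. -/
def stab {p : ℕ} [NeZero p] {ι : Type*} [Fintype ι] (f : ι → ZMod p) : ℕ :=
  ∏ j, (cnt f j).factorial

/-- The set of configurations `P` whose adjacency matrix, read modulo `p`, kills the vector `v`. -/
def killers {n d p : ℕ} (v : Fin n → ZMod p) : Finset (Equiv.Perm (Fin n × Fin d)) :=
  univ.filter fun P => ∀ k, ∑ k' : Fin d, v (P (k, k')).1 = 0

/-- The generating polynomial `∑ a ∈ T_{d,p}, ∏ i, x_{a i}` of the zero-sum `d`-tuples. -/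
noncomputable def gen (d p : ℕ) [NeZero p] (x : ZMod p → ℝ) : ℝ :=
  ∑ a ∈ Tset d p, ∏ i, x (a i)

set_option linter.unusedSectionVars false

section basics

variable {p : ℕ} [NeZero p] {ι : Type*} [Fintype ι] [DecidableEq ι]

lemma prod_comp_cnt {M : Type*} [CommMonoid M] (g : ZMod p → M) (f : ι → ZMod p) :
    ∏ i, g (f i) = ∏ j, g j ^ cnt f j := by
  rw [← Finset.prod_fiberwise (s := univ) (g := f) (f := fun i => g (f i))]
  refine prod_congr rfl fun j _ => ?_
  rw [prod_congr rfl (g := fun _ => g j)]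
  · simp [cnt]
  · intro i hi; simp at hi; rw [hi]

lemma sum_cnt (f : ι → ZMod p) : ∑ j, cnt f j = Fintype.card ι := by
  simpa [cnt] using (Finset.card_eq_sum_card_fiberwise (s := univ) (t := univ) (f := f)
    (fun _ _ => by simp)).symm

/-- The permutations `P` with `f ∘ P = g` are empty or a coset of the stabilizer of `f`. -/
lemma card_perm_comp_le (f g : ι → ZMod p) :
    (univ.filter fun P : Equiv.Perm ι => f ∘ P = g).card ≤ stab f := by
  rcases (univ.filter fun P : Equiv.Perm ι => f ∘ P = g).eq_empty_or_nonempty with h | ⟨P₀, h⟩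
  · simp [h]
  · have h1 : (univ.filter fun P : Equiv.Perm ι => f ∘ P = f).card = stab f := by
      rw [← Fintype.card_subtype, DomMulAct.stabilizer_card f]
      simp [stab, cnt, Fintype.card_subtype]
    rw [← h1]
    refine card_le_card_of_injOn (fun P => P * P₀⁻¹) ?_ ?_
    · intro P hP
      simp only [coe_filter, mem_univ, true_and, Set.mem_ofPred_eq, mem_filter] at hP h ⊢
      ext i
      have h2 := congrFun hP (P₀.symm i)
      have h3 := congrFun h (P₀.symm i)
      simp only [Function.comp_apply, Equiv.apply_symm_apply] at h2 h3
      simpa using h2.trans h3.symm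
    · intro P _ Q _ h; exact mul_right_cancel h

/-- Summing a function of `f ∘ P` over all permutations `P`, in the form of an inequality. -/
lemma sum_perm_comp_le (f : ι → ZMod p) (F : (ι → ZMod p) → ℝ) (hF : ∀ a, 0 ≤ F a) :
    ∑ P : Equiv.Perm ι, F (f ∘ P) ≤ stab f * ∑ a, F a := by
  rw [← Finset.sum_fiberwise (s := univ) (g := fun P : Equiv.Perm ι => f ∘ P), mul_sum]
  refine sum_le_sum fun a _ => ?_
  rw [sum_congr rfl (g := fun _ => F a)]
  · rw [sum_const, nsmul_eq_mul]
    exact mul_le_mul_of_nonneg_right (by exact_mod_cast card_perm_comp_le f a) (hF a)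
  · intro P hP; simp at hP; rw [hP]

lemma cnt_comp_fst {n d : ℕ} (v : Fin n → ZMod p) (j : ZMod p) :
    cnt (fun z : Fin n × Fin d => v z.1) j = d * cnt v j := by
  have : (univ.filter fun z : Fin n × Fin d => v z.1 = j)
      = (univ.filter fun i => v i = j) ×ˢ univ := by ext; simp
  rw [cnt, this, card_product]; simp [cnt, mul_comm]

lemma prod_perm_fst {n d : ℕ} (v : Fin n → ZMod p) (x : ZMod p → ℝ)
    (P : Equiv.Perm (Fin n × Fin d)) :
    ∏ z, x (v (P z).1) = (∏ i, x (v i)) ^ d := by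
  rw [Equiv.prod_comp P (fun z => x (v z.1)), Fintype.prod_prod_type]
  simp [Finset.prod_pow]

lemma gen_nonneg {d : ℕ} {x : ZMod p → ℝ} (hx : ∀ j, 0 ≤ x j) : 0 ≤ gen d p x :=
  sum_nonneg fun _ _ => prod_nonneg fun _ _ => hx _

/-- Summing product weights over the point labelings with zero sum on every fiber factorizes over
the `n` fibers. -/
lemma sum_blocks {n d : ℕ} (x : ZMod p → ℝ) :
    ∑ w ∈ univ.filter (fun w : Fin n × Fin d → ZMod p => ∀ k, ∑ k', w (k, k') = 0),
      ∏ z, x (w z) = gen d p x ^ n := by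
  rw [gen, Finset.sum_pow']
  refine Finset.sum_equiv (Equiv.curry _ _ _) ?_ ?_
  · intro w; simp [Tset, Fintype.mem_piFinset]
  · intro w _; rw [Fintype.prod_prod_type]; rfl

/-- The weighted count of configurations killing `v`: every `x ≥ 0` gives an upper bound
on their number (a Chernoff bound: product weights are constant on the labelings `v ∘ P`, and the
total weight of the labelings summing to zero on every fiber is `gen d p x ^ n`). -/
lemma killers_mul_le {n d : ℕ} (v : Fin n → ZMod p) {x : ZMod p → ℝ} (hx : ∀ j, 0 ≤ x j) :
    ((killers (d := d) v).card : ℝ) * (∏ i, x (v i)) ^ d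
      ≤ stab (fun z : Fin n × Fin d => v z.1) * gen d p x ^ n := by
  classical
  have h := sum_perm_comp_le (fun z : Fin n × Fin d => v z.1)
    (fun w => if ∀ k, ∑ k', w (k, k') = 0 then ∏ z, x (w z) else 0) (by
      intro a; split_ifs
      · exact prod_nonneg fun _ _ => hx _
      · exact le_rfl)
  rw [← sum_filter, ← sum_filter, sum_blocks] at h
  refine le_trans (le_of_eq ?_) h
  rw [sum_congr rfl (g := fun _ => (∏ i, x (v i)) ^ d)]
  · simp [killers]
  · intro P _; exact prod_perm_fst v x P

lemma addChar_sum (ψ : AddChar (ZMod p) ℂ) (s : Finset ι) (f : ι → ZMod p) :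
    ψ (∑ i ∈ s, f i) = ∏ i ∈ s, ψ (f i) := by
  induction s using Finset.induction_on with
  | empty => simp
  | insert a s ha ih => rw [sum_insert ha, prod_insert ha, AddChar.map_add_eq_mul, ih]

/-- Parseval bound for a character sum over permutations. The sum depends on `f` only through its
orbit under permutations, so its square is at most the average over all `a : ι → ZMod p` divided by
the proportion of that orbit. -/
lemma char_perm_sq_le [Fact p.Prime] (f g : ι → ZMod p) :
    ‖∑ P : Equiv.Perm ι, ZMod.stdAddChar (∑ i, f i * g (P i))‖ ^ 2
      ≤ (p : ℝ) ^ Fintype.card ι * stab f * stab g := by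
  classical
  set ψ : AddChar (ZMod p) ℂ := ZMod.stdAddChar with hψ
  set B : (ι → ZMod p) → ℂ := fun a => ∑ P : Equiv.Perm ι, ψ (∑ i, a i * g (P i)) with hB
  have h2 : ∀ Q : Equiv.Perm ι, B (f ∘ Q) = B f := by
    intro Q
    simp only [hB]
    rw [← Equiv.sum_comp (Equiv.mulRight Q)]
    refine sum_congr rfl fun P _ => ?_
    congr 1
    simp only [Function.comp_apply, Equiv.coe_mulRight, Equiv.Perm.mul_apply]
    exact Equiv.sum_comp Q (fun i => f i * g (P i))
  have h3 := sum_perm_comp_le f (fun a => ‖B a‖ ^ 2) (fun _ => by positivity)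
  simp only [h2, sum_const, nsmul_eq_mul, card_univ] at h3
  have h4 : ∑ a, ‖B a‖ ^ 2 ≤ (p : ℝ) ^ Fintype.card ι *
      (Fintype.card (Equiv.Perm ι) * stab g) := by
    have h5 : ((∑ a, ‖B a‖ ^ 2 : ℝ) : ℂ) = ∑ P : Equiv.Perm ι, ∑ P' : Equiv.Perm ι,
        if g ∘ P' = g ∘ P then (p : ℂ) ^ Fintype.card ι else 0 := by
      push_cast
      have : ∀ a, ((‖B a‖ : ℂ)) ^ 2 = ∑ P : Equiv.Perm ι, ∑ P' : Equiv.Perm ι,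
          ∏ i, ψ (a i * (g (P i) - g (P' i))) := by
        intro a
        rw [← Complex.mul_conj', hB]
        simp only [map_sum, sum_mul_sum]
        refine sum_congr rfl fun P _ => sum_congr rfl fun P' _ => ?_
        rw [← AddChar.map_neg_eq_conj, ← AddChar.map_add_eq_mul, ← sum_neg_distrib,
          ← sum_add_distrib, addChar_sum]
        exact prod_congr rfl fun i _ => by ring_nf
      simp only [this]
      rw [sum_comm]
      refine sum_congr rfl fun P _ => ?_
      rw [sum_comm]
      refine sum_congr rfl fun P' _ => ?_
      have h6 := (Finset.prod_univ_sum (fun _ : ι => (univ : Finset (ZMod p)))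
        (fun i y => ψ (y * (g (P i) - g (P' i))))).symm
      rw [Fintype.piFinset_univ] at h6
      rw [h6]
      simp only [AddChar.sum_mulShift _ (ZMod.isPrimitive_stdAddChar p), hψ]
      split_ifs with h
      · have : ∀ i, g (P i) - g (P' i) = 0 := fun i => by
          have := congrFun h i; simp at this; rw [this, sub_self]
        simp [this]
      · obtain ⟨i, hi⟩ := Function.ne_iff.mp h
        refine prod_eq_zero (mem_univ i) ?_
        rw [if_neg]; · simp
        intro h; exact hi (sub_eq_zero.mp h).symm
    have h7 : (∑ a, ‖B a‖ ^ 2 : ℝ) = ∑ P : Equiv.Perm ι, ∑ P' : Equiv.Perm ι,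
        if g ∘ P' = g ∘ P then (p : ℝ) ^ Fintype.card ι else 0 := by
      apply Complex.ofReal_injective
      rw [h5]; push_cast
      exact sum_congr rfl fun P _ => sum_congr rfl fun P' _ => by split_ifs <;> simp
    rw [h7, mul_comm, mul_assoc, ← nsmul_eq_mul, ← card_univ (α := Equiv.Perm ι), ← sum_const]
    refine sum_le_sum fun P _ => ?_
    rw [← sum_filter, sum_const, nsmul_eq_mul]
    exact mul_le_mul_of_nonneg_right (by exact_mod_cast card_perm_comp_le g _) (by positivity)
  have h8 : (0 : ℝ) < Fintype.card (Equiv.Perm ι) := by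
    exact_mod_cast Fintype.card_pos
  have h9 : (Fintype.card (Equiv.Perm ι) : ℝ) * ‖B f‖ ^ 2 ≤
     Fintype.card (Equiv.Perm ι) * ((p : ℝ) ^ Fintype.card ι * stab f * stab g) := by
    refine h3.trans ((mul_le_mul_of_nonneg_left h4 (by positivity)).trans (le_of_eq (by ring)))
  exact le_of_mul_le_mul_left h9 h8

end basics

/-! ### Sampling without replacement -/

section sampling

variable {ι : Type*} [Fintype ι] [DecidableEq ι]

/-- Sampling without replacement: if `J ⊆ L` are sets of positions and the functions `f l`,
`l ∈ J`, have mean at most `δ`, then the correlation of the values `f l (P l)`, `l ∈ L`, along a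
random permutation `P` is `O(δ ^ #J)`, with a constant depending only on `#L`.
The proof removes one position `l₀ ∈ J` at a time: by exchangeability `P l₀` may be replaced by a
uniform element outside the image of `L \ {l₀}`. -/
lemma sampling_bound {δ : ℝ} (hδ0 : 0 ≤ δ) (hδ1 : δ ≤ 1) (hN : 1 ≤ δ ^ 2 * Fintype.card ι) (K : ℕ) :
    ∀ (L J : Finset ι) (f : ι → ι → ℂ), J ⊆ L → L.card = K → 2 * K ≤ Fintype.card ι →
      (∀ l i, ‖f l i‖ ≤ 1) → (∀ l ∈ J, ‖∑ i, f l i‖ ≤ δ * Fintype.card ι) →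
      ‖∑ P : Equiv.Perm ι, ∏ l ∈ L, f l (P l)‖
        ≤ 2 ^ K * K.factorial * δ ^ J.card * Fintype.card (Equiv.Perm ι) := by
  induction K with
  | zero =>
    intro L J f hJL hL _ _ _
    obtain rfl := card_eq_zero.mp hL
    obtain rfl := subset_empty.mp hJL
    simp
  | succ K ih =>
    intro L J f hJL hL hKN hf hJ
    rcases J.eq_empty_or_nonempty with rfl | ⟨l₀, hl₀⟩
    · have h1 : ‖∑ P : Equiv.Perm ι, ∏ l ∈ L, f l (P l)‖ ≤ Fintype.card (Equiv.Perm ι) := by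
        refine (norm_sum_le _ _).trans ?_
        rw [← card_univ, ← nsmul_one, ← sum_const]
        refine sum_le_sum fun P _ => ?_
        rw [norm_prod]
        exact prod_le_one (fun _ _ => norm_nonneg _) (fun _ _ => hf _ _)
      have h2 : (1 : ℝ) ≤ 2 ^ (K + 1) * (K + 1).factorial := by
        exact_mod_cast Nat.succ_le_of_lt (by positivity)
      simp only [card_empty, pow_zero, mul_one]
      exact h1.trans (le_mul_of_one_le_left (by positivity) h2)
    · set N : ℝ := (Fintype.card ι : ℝ) with hNdef
      set M : ℝ := (Fintype.card (Equiv.Perm ι) : ℝ) with hM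
      set L' := L.erase l₀ with hL'
      have hl₀L : l₀ ∈ L := hJL hl₀
      have hcL' : L'.card = K := by rw [hL', card_erase_of_mem hl₀L, hL]; rfl
      set G : Equiv.Perm ι → ℂ := fun P => ∏ l ∈ L', f l (P l) with hG
      set S := ∑ P : Equiv.Perm ι, ∏ l ∈ L, f l (P l) with hS
      have hS' : S = ∑ P : Equiv.Perm ι, G P * f l₀ (P l₀) := by
        refine sum_congr rfl fun P _ => ?_
        rw [hG]; dsimp only; rw [hL', prod_erase_mul _ _ hl₀L]
      have hswap : ∀ r ∈ L'ᶜ, ∑ P : Equiv.Perm ι, G P * f l₀ (P r) = S := by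
        intro r hr
        rw [hS', ← Equiv.sum_comp (Equiv.mulRight (Equiv.swap r l₀))]
        refine sum_congr rfl fun P _ => ?_
        simp only [Equiv.coe_mulRight, Equiv.Perm.mul_apply, Equiv.swap_apply_left, hG]
        congr 1
        refine prod_congr rfl fun l hl => ?_
        rw [Equiv.swap_apply_of_ne_of_ne]
        · rintro rfl; exact (mem_compl.mp hr) hl
        · exact (mem_erase.mp hl).1
      have hkey : ((Fintype.card ι - K : ℕ) : ℂ) * S = (∑ i, f l₀ i) * (∑ P, G P)
          - ∑ r ∈ L', ∑ P : Equiv.Perm ι, G P * f l₀ (P r) := by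
        have h1 : ((Fintype.card ι - K : ℕ) : ℂ) * S
            = ∑ r ∈ L'ᶜ, ∑ P : Equiv.Perm ι, G P * f l₀ (P r) := by
          rw [sum_congr rfl hswap, sum_const, card_compl, hcL', nsmul_eq_mul]
        rw [h1, eq_sub_iff_add_eq, sum_compl_add_sum, sum_comm, mul_sum]
        refine sum_congr rfl fun P _ => ?_
        rw [← mul_sum, Equiv.sum_comp P (f l₀), mul_comm]
      have hJ1 : J.erase l₀ ⊆ L' := erase_subset_erase _ hJL
      have hc1 : (J.erase l₀).card + 1 = J.card := card_erase_add_one hl₀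
      have hb1 : ‖∑ P, G P‖ ≤ 2 ^ K * K.factorial * δ ^ (J.erase l₀).card * M :=
        ih L' (J.erase l₀) f hJ1 hcL' (by omega) hf fun l hl => hJ l (mem_of_mem_erase hl)
      have hb2 : ∀ r ∈ L', ‖∑ P : Equiv.Perm ι, G P * f l₀ (P r)‖
          ≤ 2 ^ K * K.factorial * (N * δ ^ J.card) * M := by
        intro r hr
        have e : ∀ P : Equiv.Perm ι, G P * f l₀ (P r)
            = ∏ l ∈ L', (Function.update f r fun i => f r i * f l₀ i) l (P l) := by
          intro P
          rw [hG]; dsimp only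
          rw [← mul_prod_erase L' _ hr, ← mul_prod_erase L' _ hr,
            Function.update_self]
          have hupd : ∏ l ∈ L'.erase r, (Function.update f r fun i => f r i * f l₀ i) l (P l)
              = ∏ l ∈ L'.erase r, f l (P l) :=
            prod_congr rfl fun l hl => by rw [Function.update_of_ne (mem_erase.mp hl).1]
          rw [hupd]; ring
        rw [sum_congr rfl fun P _ => e P]
        have h3 := ih L' ((J.erase l₀).erase r) (Function.update f r fun i => f r i * f l₀ i)
          ((erase_subset _ _).trans hJ1) hcL' (by omega) (by
            intro l i
            by_cases h : l = r
            · subst h; rw [Function.update_self, norm_mul]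
              exact mul_le_one₀ (hf _ _) (norm_nonneg _) (hf _ _)
            · rw [Function.update_of_ne h]; exact hf _ _) (by
            intro l hl
            rw [Function.update_of_ne (mem_erase.mp hl).1]
            exact hJ l (mem_of_mem_erase (mem_of_mem_erase hl)))
        refine h3.trans ?_
        have hc2 : J.card ≤ ((J.erase l₀).erase r).card + 2 := by
          have := pred_card_le_card_erase (s := J.erase l₀) (a := r)
          omega
        have h4 : δ ^ ((J.erase l₀).erase r).card ≤ N * δ ^ J.card := by
          calc δ ^ ((J.erase l₀).erase r).card
              ≤ δ ^ ((J.erase l₀).erase r).card * (δ ^ 2 * N) :=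
                le_mul_of_one_le_right (by positivity) hN
            _ = N * δ ^ (((J.erase l₀).erase r).card + 2) := by ring
            _ ≤ N * δ ^ J.card :=
                mul_le_mul_of_nonneg_left (pow_le_pow_of_le_one hδ0 hδ1 hc2) (by positivity)
        gcongr
      have hn : ((Fintype.card ι - K : ℕ) : ℝ) * ‖S‖ ≤
          (δ * N) * (2 ^ K * K.factorial * δ ^ (J.erase l₀).card * M)
            + K * (2 ^ K * K.factorial * (N * δ ^ J.card) * M) := by
        rw [← Complex.norm_natCast, ← norm_mul, hkey]
        refine (norm_sub_le _ _).trans (add_le_add ?_ ?_)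
        · rw [norm_mul]
          exact mul_le_mul (hJ l₀ hl₀) hb1 (norm_nonneg _) (by positivity)
        · refine (norm_sum_le _ _).trans ((sum_le_sum hb2).trans (le_of_eq ?_))
          rw [sum_const, hcL', nsmul_eq_mul]
      have hN2 : N ≤ 2 * ((Fintype.card ι - K : ℕ) : ℝ) := by
        rw [hNdef]; exact_mod_cast (by omega : Fintype.card ι ≤ 2 * (Fintype.card ι - K))
      have hNpos : 0 < N := by rw [hNdef]; exact_mod_cast (by omega : 0 < Fintype.card ι)
      have hfin : N * ‖S‖ ≤ N * (2 ^ (K + 1) * (K + 1).factorial * δ ^ J.card * M) := by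
        calc N * ‖S‖ ≤ 2 * (((Fintype.card ι - K : ℕ) : ℝ) * ‖S‖) := by
              rw [← mul_assoc]; exact mul_le_mul_of_nonneg_right hN2 (norm_nonneg _)
          _ ≤ 2 * ((δ * N) * (2 ^ K * K.factorial * δ ^ (J.erase l₀).card * M)
            + K * (2 ^ K * K.factorial * (N * δ ^ J.card) * M)) := by gcongr
          _ = _ := by
              rw [← hc1, Nat.factorial_succ]; push_cast; ring
      exact le_of_mul_le_mul_left hfin hNpos

end sampling

/-! ### Entropy and Stirling bounds -/

/-- The empirical frequency of the value `j` among the coordinates of `v` (zero if `n = 0`). -/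
noncomputable def freq {n p : ℕ} (v : Fin n → ZMod p) (j : ZMod p) : ℝ := cnt v j / n

/-- The weight `∏ j, ν_j ^ (n ν_j) = exp (-n H(ν))`, where `ν` is the vector of empirical
frequencies of `v` and `H` the Shannon entropy. -/
noncomputable def wt {n p : ℕ} (v : Fin n → ZMod p) : ℝ := ∏ i, freq v (v i)

/-- The chi-square distance `p ∑ j, (x_j - 1/p)²` of `x` from the uniform distribution. -/
noncomputable def chi {p : ℕ} [NeZero p] (x : ZMod p → ℝ) : ℝ := p * ∑ j, (x j - 1 / p) ^ 2

/-- The polynomial factor lost when Stirling's formula is applied to a product of `p` factorials of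
numbers up to `n * d`. -/
noncomputable def polyFac (n d p : ℕ) : ℝ := (Real.exp 1 * (n * d + 1)) ^ p

/-- The probability that the random configuration kills the vector `v`. -/
noncomputable def prob {n p : ℕ} (d : ℕ) (v : Fin n → ZMod p) : ℝ :=
  (killers (d := d) v).card / (n * d).factorial

section entropy

variable {n d p : ℕ} [NeZero p]

lemma factorial_le_stirling (m : ℕ) :
    (m.factorial : ℝ) ≤ Real.exp 1 * (m + 1) * (m / Real.exp 1) ^ m := by
  have key : ∀ m : ℕ, (m.factorial : ℝ) * Real.exp 1 ^ m ≤ Real.exp 1 * (m + 1) * m ^ m := by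
    intro m
    rcases Nat.eq_zero_or_pos m with rfl | hm
    · simp
    · have h : (m.factorial : ℝ) * Real.exp 1 ^ m ≤ Real.exp 1 * m * m ^ m := by
        induction m, hm using Nat.le_induction with
        | base => simp
        | succ m hm ih =>
          have hm0 : (0 : ℝ) < m := by exact_mod_cast hm
          have h1 : Real.exp 1 * (m : ℝ) ^ (m + 1) ≤ ((m + 1 : ℕ) : ℝ) ^ (m + 1) := by
            have h2 : Real.exp 1 ≤ (((m : ℝ) + 1) / m) ^ (m + 1) := by
              rw [← Real.exp_log (x := ((m : ℝ) + 1) / m) (by positivity), ← Real.exp_nat_mul]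
              apply Real.exp_le_exp.mpr
              have h3 := Real.one_sub_inv_le_log_of_pos (x := ((m : ℝ) + 1) / m) (by positivity)
              have h4 : 1 - (((m : ℝ) + 1) / m)⁻¹ = 1 / ((m + 1 : ℕ) : ℝ) := by
                push_cast; field_simp; ring
              rw [h4] at h3
              rw [div_le_iff₀ (by positivity)] at h3
              linarith
            rw [div_pow, le_div_iff₀ (by positivity)] at h2
            push_cast; exact h2
          calc ((m + 1).factorial : ℝ) * Real.exp 1 ^ (m + 1)
              = (m + 1) * Real.exp 1 * (m.factorial * Real.exp 1 ^ m) := by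
                rw [Nat.factorial_succ]; push_cast; ring
            _ ≤ (m + 1) * Real.exp 1 * (Real.exp 1 * m * m ^ m) := by gcongr
            _ = (m + 1) * Real.exp 1 * (Real.exp 1 * m ^ (m + 1)) := by ring
            _ ≤ (m + 1) * Real.exp 1 * (((m + 1 : ℕ) : ℝ) ^ (m + 1)) := by gcongr
            _ = _ := by push_cast; ring
      refine h.trans ?_
      gcongr; linarith
  rw [div_pow, ← mul_div_assoc, le_div_iff₀ (by positivity)]
  exact key m

lemma stirling_le_factorial (m : ℕ) : (m / Real.exp 1) ^ m ≤ (m.factorial : ℝ) := by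
  have h := Real.pow_div_factorial_le_exp (m : ℝ) (Nat.cast_nonneg m) m
  rw [div_le_iff₀ (by positivity)] at h
  rw [div_pow, div_le_iff₀ (by positivity), ← Real.exp_nat_mul, mul_one, mul_comm]
  exact h

lemma freq_nonneg (v : Fin n → ZMod p) (j : ZMod p) : 0 ≤ freq v j := by
  unfold freq; positivity

lemma sum_freq (hn : 0 < n) (v : Fin n → ZMod p) : ∑ j, freq v j = 1 := by
  simp only [freq]
  rw [← sum_div, ← Nat.cast_sum, sum_cnt, Fintype.card_fin]
  field_simp

lemma freq_pos (v : Fin n → ZMod p) (i : Fin n) : 0 < freq v (v i) := by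
  have hn : 0 < n := i.pos
  have : 0 < cnt v (v i) := card_pos.mpr ⟨i, by simp⟩
  unfold freq; positivity

lemma wt_pos (v : Fin n → ZMod p) : 0 < wt v := prod_pos fun i _ => freq_pos v i

lemma wt_eq (v : Fin n → ZMod p) : wt v = ∏ j, freq v j ^ cnt v j :=
  prod_comp_cnt (freq v) v

lemma polyFac_pos : 0 < polyFac n d p := by unfold polyFac; positivity

/-- Stirling's formula: `(nd)! / stab` is, up to a polynomial factor, at least `exp (n d H(ν))`. -/
lemma stab_le (hn : 0 < n) (v : Fin n → ZMod p) :
    (stab (fun z : Fin n × Fin d => v z.1) : ℝ)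
      ≤ (n * d).factorial * polyFac n d p * wt v ^ d := by
  have hn' : (n : ℝ) ≠ 0 := by positivity
  have hc : ∀ j, cnt v j ≤ n := fun j => by
    simpa [cnt] using card_le_univ (univ.filter fun i => v i = j)
  calc (stab (fun z : Fin n × Fin d => v z.1) : ℝ)
      = ∏ j, ((d * cnt v j).factorial : ℝ) := by
        unfold stab; push_cast; simp only [cnt_comp_fst]
    _ ≤ ∏ j, (Real.exp 1 * (n * d + 1)) * ((n * d : ℕ) / Real.exp 1 * freq v j) ^ (d * cnt v j) := by
        refine prod_le_prod (fun _ _ => by positivity) fun j _ => ?_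
        refine (factorial_le_stirling _).trans ?_
        have e : (((d * cnt v j : ℕ) : ℝ) / Real.exp 1)
            = (n * d : ℕ) / Real.exp 1 * freq v j := by
          unfold freq; push_cast; field_simp
        rw [e]
        have : ((d * cnt v j : ℕ) : ℝ) ≤ n * d := by
          have := Nat.mul_le_mul_left d (hc j)
          rw [mul_comm d n] at this
          exact_mod_cast this
        have := freq_nonneg v j
        gcongr
    _ = polyFac n d p * (((n * d : ℕ) / Real.exp 1) ^ (n * d) * wt v ^ d) := by
        rw [prod_mul_distrib, prod_const, card_univ, ZMod.card]
        congr 1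
        simp only [mul_pow]
        rw [prod_mul_distrib, prod_pow_eq_pow_sum, ← mul_sum, sum_cnt, Fintype.card_fin,
          mul_comm d n, wt_eq, ← prod_pow]
        congr 1
        exact prod_congr rfl fun j _ => by rw [← pow_mul, mul_comm d]
    _ ≤ polyFac n d p * ((n * d).factorial * wt v ^ d) := by
        have := stirling_le_factorial (n * d)
        have := (polyFac_pos (n := n) (d := d) (p := p)).le
        have := (wt_pos v).le
        gcongr
    _ = _ := by ring

/-- The weights have polynomially bounded sum: for each of the at most `(n + 1) ^ p` count vectors
`κ`, the vectors `v` with these counts have total weight at most the total mass `1` of the product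
measure with marginals `κ / n`. -/
lemma sum_wt_le (hn : 0 < n) : ∑ v : Fin n → ZMod p, wt v ≤ (n + 1 : ℝ) ^ p := by
  classical
  have hn' : (n : ℝ) ≠ 0 := by positivity
  set D : Finset (ZMod p → Fin (n + 1)) := univ.filter fun κ => ∑ j, (κ j : ℕ) = n with hD
  have h1 : ∀ v : Fin n → ZMod p, wt v ≤ ∑ κ ∈ D, ∏ i, ((κ (v i) : ℕ) / n : ℝ) := by
    intro v
    have hc : ∀ j, cnt v j < n + 1 := fun j => Nat.lt_succ_of_le (by
      simpa [cnt] using card_le_univ (univ.filter fun i => v i = j))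
    have hmem : (fun j => ⟨cnt v j, hc j⟩ : ZMod p → Fin (n + 1)) ∈ D := by
      simp [hD, sum_cnt]
    have hF : ∀ κ ∈ D, 0 ≤ ∏ i, ((κ (v i) : ℕ) / n : ℝ) := fun κ _ => by positivity
    have h := single_le_sum hF hmem
    unfold wt freq
    exact h
  calc ∑ v : Fin n → ZMod p, wt v
      ≤ ∑ v : Fin n → ZMod p, ∑ κ ∈ D, ∏ i, ((κ (v i) : ℕ) / n : ℝ) := sum_le_sum fun v _ => h1 v
    _ = ∑ κ ∈ D, ∑ v : Fin n → ZMod p, ∏ i, ((κ (v i) : ℕ) / n : ℝ) := sum_comm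
    _ = ∑ κ ∈ D, 1 := by
        refine sum_congr rfl fun κ hκ => ?_
        have h2 := Finset.sum_pow' (univ : Finset (ZMod p)) (fun j => ((κ j : ℕ) / n : ℝ)) n
        rw [Fintype.piFinset_univ] at h2
        rw [← h2, ← sum_div, ← Nat.cast_sum, (mem_filter.mp hκ).2, div_self hn', one_pow]
    _ ≤ (n + 1 : ℝ) ^ p := by
        rw [sum_const, nsmul_one]
        have := card_le_univ D
        simp only [Fintype.card_pi, Fintype.card_fin, prod_const, card_univ, ZMod.card] at this
        exact_mod_cast this

lemma chi_nonneg (x : ZMod p → ℝ) : 0 ≤ chi x := by unfold chi; positivity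

/-- `p ^ n * wt v` is the exponential of `n` times the relative entropy of `freq v` with respect to
the uniform distribution. -/
lemma log_wt (hn : 0 < n) (v : Fin n → ZMod p) :
    (p : ℝ) ^ n * wt v = Real.exp (n * ∑ j, freq v j * Real.log (p * freq v j)) := by
  have hp : 0 < (p : ℝ) := by exact_mod_cast Nat.pos_of_neZero p
  have h1 : (p : ℝ) ^ n * wt v = ∏ i, Real.exp (Real.log (p * freq v (v i))) := by
    rw [wt, show (p : ℝ) ^ n = ∏ _i : Fin n, (p : ℝ) by simp, ← prod_mul_distrib]
    exact prod_congr rfl fun i _ => (Real.exp_log (mul_pos hp (freq_pos v i))).symm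
  rw [h1, prod_comp_cnt (fun j => Real.exp (Real.log (p * freq v j)))]
  simp only [← Real.exp_nat_mul]
  rw [← Real.exp_sum, mul_sum]
  congr 1
  refine sum_congr rfl fun j _ => ?_
  unfold freq; field_simp

lemma chi_eq {x : ZMod p → ℝ} (hx : ∑ j, x j = 1) : chi x = ∑ j, x j * (p * x j - 1) := by
  have hp : (p : ℝ) ≠ 0 := by exact_mod_cast NeZero.ne p
  have : ∀ j, (p : ℝ) * (x j - 1 / p) ^ 2 = x j * (p * x j - 1) - x j + 1 / p := by
    intro j; field_simp; ring
  rw [chi, mul_sum, sum_congr rfl fun j _ => this j, sum_add_distrib, sum_sub_distrib, hx]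
  simp [ZMod.card, hp]

/-- Upper bound for the relative entropy with respect to the uniform distribution. -/
lemma wt_le_exp (hn : 0 < n) (v : Fin n → ZMod p) :
    (p : ℝ) ^ n * wt v ≤ Real.exp (n * chi (freq v)) := by
  have hp : 0 < (p : ℝ) := by exact_mod_cast Nat.pos_of_neZero p
  rw [log_wt hn, chi_eq (sum_freq hn v)]
  apply Real.exp_le_exp.mpr
  refine mul_le_mul_of_nonneg_left (sum_le_sum fun j _ => ?_) (by positivity)
  rcases (freq_nonneg v j).eq_or_lt with h | h
  · simp [← h]
  · exact mul_le_mul_of_nonneg_left (Real.log_le_sub_one_of_pos (by positivity)) h.le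

/-- A quadratic improvement of `z - 1 ≤ z log z`, from `log z = 2 log √z ≥ 2 (1 - 1 / √z)`, which gives
the gain `(√z - 1)² = (z - 1)² / (√z + 1)²`, where `(√z + 1)² ≤ 4 P`. -/
lemma mul_log_ge {z P : ℝ} (hz : 0 ≤ z) (hzP : z ≤ P) (hP : 1 ≤ P) :
    (z - 1) + (z - 1) ^ 2 / (4 * P) ≤ z * Real.log z := by
  rcases hz.eq_or_lt with rfl | hz0
  · have : (0 - 1 : ℝ) ^ 2 / (4 * P) ≤ 1 := by
      rw [div_le_one (by positivity)]; linarith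
    simp only [zero_mul]; linarith
  · set r := √z with hr
    have hr0 : 0 < r := Real.sqrt_pos.mpr hz0
    have hrr : z = r ^ 2 := (Real.sq_sqrt hz).symm
    have h1 : Real.log z = 2 * Real.log r := by rw [hrr, Real.log_pow]; push_cast; ring
    have h2 := Real.one_sub_inv_le_log_of_pos hr0
    have h3 : 2 * r ^ 2 - 2 * r ≤ z * Real.log z := by
      rw [h1]
      calc 2 * r ^ 2 - 2 * r = r ^ 2 * (2 * (1 - r⁻¹)) := by field_simp
        _ ≤ r ^ 2 * (2 * Real.log r) := by gcongr
        _ = _ := by rw [hrr]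
    have h4 : (z - 1) ^ 2 / (4 * P) ≤ (r - 1) ^ 2 := by
      rw [div_le_iff₀ (by positivity)]
      have h5 : (r + 1) ^ 2 ≤ 4 * P := by
        nlinarith [sq_nonneg (r - 1)]
      have : (z - 1) ^ 2 = (r - 1) ^ 2 * (r + 1) ^ 2 := by rw [hrr]; ring
      rw [this]
      exact mul_le_mul_of_nonneg_left h5 (sq_nonneg _)
    nlinarith

/-- Lower bound for the relative entropy with respect to the uniform distribution. -/
lemma exp_le_wt (hn : 0 < n) (v : Fin n → ZMod p) :
    Real.exp (n * chi (freq v) / (4 * p)) ≤ (p : ℝ) ^ n * wt v := by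
  have hp : 0 < (p : ℝ) := by exact_mod_cast Nat.pos_of_neZero p
  have hp1 : 1 ≤ (p : ℝ) := by exact_mod_cast Nat.pos_of_neZero p
  rw [log_wt hn]
  apply Real.exp_le_exp.mpr
  rw [mul_div_assoc]
  refine mul_le_mul_of_nonneg_left ?_ (by positivity)
  have h1 : ∀ j, (p * freq v j - 1) / p + (freq v j - 1 / p) ^ 2 / 4
      ≤ freq v j * Real.log (p * freq v j) := by
    intro j
    have h0 := freq_nonneg v j
    have hle : freq v j ≤ 1 := by
      rw [← sum_freq hn v]; exact single_le_sum (fun j _ => freq_nonneg v j) (mem_univ j)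
    have h2 := mul_log_ge (z := p * freq v j) (P := p) (by positivity)
      (mul_le_of_le_one_right hp.le hle) hp1
    have h3 : (p * freq v j - 1) / p + (freq v j - 1 / p) ^ 2 / 4
        = ((p * freq v j - 1) + (p * freq v j - 1) ^ 2 / (4 * p)) / p := by field_simp
    rw [h3, div_le_iff₀ hp]
    linarith
  refine le_trans (le_of_eq ?_) (sum_le_sum fun j _ => h1 j)
  rw [sum_add_distrib, ← sum_div, ← sum_div, sum_sub_distrib, ← mul_sum, sum_freq hn, chi]
  simp [ZMod.card]
  field_simp

lemma prob_nonneg (v : Fin n → ZMod p) : 0 ≤ prob d v := by unfold prob; positivity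

/-- The Chernoff bound `killers_mul_le`, normalized to probabilities. -/
lemma prob_mul_le (hn : 0 < n) (v : Fin n → ZMod p) {x : ZMod p → ℝ} (hx : ∀ j, 0 ≤ x j) :
    prob d v * (∏ i, x (v i)) ^ d ≤ polyFac n d p * wt v ^ d * gen d p x ^ n := by
  have h := killers_mul_le (d := d) v hx
  have h2 := mul_le_mul_of_nonneg_right (stab_le (d := d) hn v) (pow_nonneg (gen_nonneg (d := d) hx) n)
  have hf : (0 : ℝ) < (n * d).factorial := by positivity
  rw [prob, div_mul_eq_mul_div, div_le_iff₀ hf]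
  calc _ ≤ _ := h
    _ ≤ _ := h2
    _ = _ := by ring

end entropy

/-! ### Sparse vectors -/

/-- The number of nonzero coordinates of `v`. -/
def nz {n p : ℕ} (v : Fin n → ZMod p) : ℕ := (univ.filter fun i => v i ≠ 0).card

/-- The weight giving mass `1` to the value `0` and mass `y` to each nonzero value. -/
noncomputable def spike {p : ℕ} (y : ℝ) (j : ZMod p) : ℝ := if j = 0 then 1 else y

section sparse

variable {n d p : ℕ} [NeZero p]

lemma prod_spike (y : ℝ) (v : Fin n → ZMod p) : ∏ i, spike y (v i) = y ^ nz v := by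
  simp [spike, prod_ite, nz]

lemma spike_nonneg {y : ℝ} (hy : 0 ≤ y) (j : ZMod p) : 0 ≤ spike y j := by
  unfold spike; split_ifs <;> linarith

lemma nz_add_cnt (v : Fin n → ZMod p) : nz v + cnt v 0 = n := by
  have := card_filter_add_card_filter_not (s := (univ : Finset (Fin n))) (fun i => v i = 0)
  simp only [card_univ, Fintype.card_fin] at this
  simp only [nz, cnt, ne_eq]; omega

/-- Bound for the number of vectors with `k` nonzero coordinates. -/
lemma card_nz_mul_le {y : ℝ} (hy : 0 ≤ y) (k : ℕ) :
    ((univ.filter fun v : Fin n → ZMod p => nz v = k).card : ℝ) * y ^ k ≤ Real.exp (p * n * y) := by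
  have h1 : ∑ v : Fin n → ZMod p, ∏ i, spike y (v i) = (∑ j : ZMod p, spike y j) ^ n := by
    have h2 := Finset.sum_pow' (univ : Finset (ZMod p)) (spike y) n
    rw [Fintype.piFinset_univ] at h2
    exact h2.symm
  have h2 : ∑ j : ZMod p, spike y j ≤ 1 + p * y := by
    calc ∑ j : ZMod p, spike y j ≤ ∑ j : ZMod p, ((if j = 0 then 1 else 0) + y) := by
          refine sum_le_sum fun j _ => ?_
          unfold spike; split_ifs <;> linarith
      _ = 1 + p * y := by rw [sum_add_distrib]; simp [ZMod.card]
  have h0 : 0 ≤ ∑ j : ZMod p, spike y j := sum_nonneg fun j _ => spike_nonneg hy j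
  calc ((univ.filter fun v : Fin n → ZMod p => nz v = k).card : ℝ) * y ^ k
      = ∑ v ∈ univ.filter (fun v : Fin n → ZMod p => nz v = k), ∏ i, spike y (v i) := by
        rw [sum_congr rfl (g := fun _ => y ^ k)]
        · simp
        · intro v hv; rw [prod_spike, (mem_filter.mp hv).2]
    _ ≤ ∑ v : Fin n → ZMod p, ∏ i, spike y (v i) :=
        sum_le_sum_of_subset_of_nonneg (subset_univ _)
          fun v _ _ => prod_nonneg fun i _ => spike_nonneg hy _
    _ ≤ (1 + p * y) ^ n := by rw [h1]; exact pow_le_pow_left₀ h0 h2 n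
    _ ≤ Real.exp (p * y) ^ n := by
        refine pow_le_pow_left₀ (by positivity) ?_ n
        linarith [Real.add_one_le_exp (p * y)]
    _ = _ := by rw [← Real.exp_nat_mul]; ring_nf

/-- A nonzero tuple with zero sum has at least two nonzero coordinates. -/
lemma gen_spike_le {y : ℝ} (hy : 0 ≤ y) (hy1 : y ≤ 1) :
    gen d p (spike y) ≤ 1 + p ^ d * y ^ 2 := by
  have hle : ∀ j : ZMod p, spike y j ≤ 1 := fun j => by unfold spike; split_ifs <;> linarith
  have h1 : ∀ a ∈ Tset d p, ∏ i, spike y (a i) ≤ (if a = 0 then 1 else 0) + y ^ 2 := by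
    intro a ha
    by_cases h : a = 0
    · subst h; simp [spike]; positivity
    · rw [if_neg h, zero_add]
      obtain ⟨i, hi⟩ := Function.ne_iff.mp h
      have hex : ∃ i', i' ≠ i ∧ a i' ≠ 0 := by
        by_contra hcon
        push Not at hcon
        have hs := (mem_filter.mp ha).2
        rw [sum_eq_single i (fun b _ hb => hcon b hb) (by simp)] at hs
        exact hi hs
      obtain ⟨i', hne, hi'⟩ := hex
      rw [← mul_prod_erase univ _ (mem_univ i),
        ← mul_prod_erase (univ.erase i) _ (mem_erase.mpr ⟨hne, mem_univ i'⟩)]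
      have e1 : spike y (a i) = y := if_neg hi
      have e2 : spike y (a i') = y := if_neg hi'
      have e3 : ∏ x ∈ (univ.erase i).erase i', spike y (a x) ≤ 1 :=
        prod_le_one (fun _ _ => spike_nonneg hy _) fun _ _ => hle _
      rw [e1, e2]
      calc _ ≤ y * (y * 1) := by gcongr
        _ = _ := by ring
  calc gen d p (spike y) ≤ ∑ a ∈ Tset d p, ((if a = 0 then 1 else 0) + y ^ 2) := sum_le_sum h1
    _ ≤ ∑ a : Fin d → ZMod p, ((if a = 0 then 1 else 0) + y ^ 2) :=
        sum_le_sum_of_subset_of_nonneg (subset_univ _) fun a _ _ => by positivity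
    _ = _ := by rw [sum_add_distrib]; simp [ZMod.card]

/-- The counts of the nonzero values are merged into one factorial. -/
lemma stab_sparse_le (v : Fin n → ZMod p) :
    stab (fun z : Fin n × Fin d => v z.1)
      ≤ (d * nz v).factorial * (n * d - d * nz v).factorial := by
  have h0 := nz_add_cnt v
  unfold stab
  rw [← mul_prod_erase univ _ (mem_univ 0), mul_comm]
  simp only [cnt_comp_fst]
  have e : n * d - d * nz v = d * cnt v 0 := by
    rw [mul_comm n d, ← Nat.mul_sub]; congr 1; omega
  rw [e]
  refine Nat.mul_le_mul_right _ ?_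
  have h1 : ∑ j ∈ univ.erase 0, d * cnt v j = d * nz v := by
    rw [← mul_sum]
    congr 1
    have h2 := sum_cnt v
    rw [← add_sum_erase univ _ (mem_univ 0), Fintype.card_fin] at h2
    omega
  rw [← h1]
  exact Nat.le_of_dvd (Nat.factorial_pos _) (Nat.prod_factorial_dvd_factorial_sum _ _)

/-- The expected number of kernel vectors with `k` nonzero coordinates is at most
`(C √(k/n)) ^ k`. There are at most `(O(n/k)) ^ k` such vectors, each of them killed with probability at
most `O((k/n) ^ (d/2)) ^ k`, and `d ≥ 3`. -/
lemma sum_sparse_le (hd : 3 ≤ d) {k : ℕ} (hk : 1 ≤ k) (hkn : 2 * k ≤ n) :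
    ∑ v ∈ univ.filter (fun v : Fin n → ZMod p => nz v = k), prob d v
      ≤ (Real.exp (p ^ d + p) * 2 ^ d * √(k / n)) ^ k := by
  have hn0 : (0 : ℝ) < n := by exact_mod_cast (by omega : 0 < n)
  have hk0 : (0 : ℝ) < k := by exact_mod_cast hk
  -- Weight `y = √(k/n)` per nonzero value makes `gen d p (spike y) ^ n = exp (O(k))`, as `n y² = k`.
  set y := √((k : ℝ) / n) with hy
  have hy0 : 0 < y := Real.sqrt_pos.mpr (by positivity)
  have hyy : y ^ 2 = k / n := Real.sq_sqrt (by positivity)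
  have hy1 : y ≤ 1 := by
    rw [hy, Real.sqrt_le_one, div_le_one hn0]
    exact_mod_cast (by omega : k ≤ n)
  have hprob : ∀ v : Fin n → ZMod p, nz v = k →
      prob d v ≤ (Real.exp (p ^ d) * 2 ^ d * y ^ d) ^ k := by
    intro v hv
    have h1 := killers_mul_le (d := d) v (spike_nonneg hy0.le)
    rw [prod_spike, hv] at h1
    have h2 : (stab (fun z : Fin n × Fin d => v z.1) : ℝ)
        ≤ (n * d).factorial * (2 * y ^ 2) ^ (d * k) := by
      have hs : (stab (fun z : Fin n × Fin d => v z.1) : ℝ)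
          ≤ (d * k).factorial * (n * d - d * k).factorial := by
        have := stab_sparse_le (d := d) v
        rw [hv] at this
        exact_mod_cast this
      refine hs.trans ?_
      have hKN : d * k ≤ n * d := by rw [mul_comm n d]; exact Nat.mul_le_mul_left d (by omega)
      have h2K : 2 * (d * k) ≤ n * d := by
        calc 2 * (d * k) = d * (2 * k) := by ring
          _ ≤ d * n := Nat.mul_le_mul_left d hkn
          _ = n * d := mul_comm _ _
      have hch := Nat.pow_le_choose (α := ℝ) (d * k) (n * d)
      rw [div_le_iff₀ (by positivity)] at hch
      have hfac : ((n * d).choose (d * k) * (d * k).factorial * (n * d - d * k).factorial : ℝ)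
          = (n * d).factorial := by exact_mod_cast Nat.choose_mul_factorial_mul_factorial hKN
      have hK : ((d * k).factorial : ℝ) ≤ ((d * k : ℕ) : ℝ) ^ (d * k) := by
        exact_mod_cast Nat.factorial_le_pow _
      have hb : ((d * k).factorial : ℝ) ≤
          (n * d).choose (d * k) * (d * k).factorial * (2 * y ^ 2) ^ (d * k) := by
        refine hK.trans ?_
        calc ((d * k : ℕ) : ℝ) ^ (d * k)
            = ((n * d : ℕ) / 2 : ℝ) ^ (d * k) * (2 * y ^ 2) ^ (d * k) := by
              rw [← mul_pow, hyy]; congr 1; push_cast; field_simp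
          _ ≤ ((n * d + 1 - d * k : ℕ) : ℝ) ^ (d * k) * (2 * y ^ 2) ^ (d * k) := by
              gcongr
              rw [div_le_iff₀ (by norm_num)]
              exact_mod_cast (by omega : n * d ≤ (n * d + 1 - d * k) * 2)
          _ ≤ _ := by gcongr
      calc _ ≤ ((n * d).choose (d * k) * (d * k).factorial * (2 * y ^ 2) ^ (d * k) : ℝ)
            * (n * d - d * k).factorial := by gcongr
        _ = _ := by rw [← hfac]; ring
    have h3 : gen d p (spike y) ^ n ≤ Real.exp (p ^ d * k) := by
      calc gen d p (spike y) ^ n ≤ (Real.exp (p ^ d * y ^ 2)) ^ n := by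
            refine pow_le_pow_left₀ (gen_nonneg (spike_nonneg hy0.le)) ?_ n
            refine (gen_spike_le hy0.le hy1).trans ?_
            linarith [Real.add_one_le_exp ((p : ℝ) ^ d * y ^ 2)]
        _ = _ := by
            rw [← Real.exp_nat_mul, hyy]; congr 1; field_simp
    have h4 : ((killers (d := d) v).card : ℝ) * y ^ (d * k)
        ≤ ((n * d).factorial * (2 * y ^ 2) ^ (d * k)) * Real.exp (p ^ d * k) := by
      rw [mul_comm d k, pow_mul]
      refine h1.trans ?_
      rw [mul_comm k d]
      exact mul_le_mul h2 h3 (pow_nonneg (gen_nonneg (spike_nonneg hy0.le)) n) (by positivity)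
    rw [prob, div_le_iff₀ (by positivity)]
    refine le_of_mul_le_mul_right (h4.trans (le_of_eq ?_)) (pow_pos hy0 (d * k))
    rw [mul_comm ((p : ℝ) ^ d) k, Real.exp_nat_mul]
    simp only [mul_pow, ← pow_mul]
    rw [show 2 * (d * k) = d * k + d * k by ring, pow_add]
    ring
  -- The count uses the different weight `y² = k/n`, the optimal one for the number of such vectors.
  have hcount := card_nz_mul_le (n := n) (p := p) (sq_nonneg y) k
  have hexp : Real.exp (p * n * y ^ 2) = Real.exp p ^ k := by
    rw [← Real.exp_nat_mul, hyy]; congr 1; field_simp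
  rw [hexp] at hcount
  calc ∑ v ∈ univ.filter (fun v : Fin n → ZMod p => nz v = k), prob d v
      ≤ ∑ v ∈ univ.filter (fun v : Fin n → ZMod p => nz v = k),
          (Real.exp (p ^ d) * 2 ^ d * y ^ d) ^ k :=
        sum_le_sum fun v hv => hprob v (mem_filter.mp hv).2
    _ = ((univ.filter fun v : Fin n → ZMod p => nz v = k).card * (y ^ 2) ^ k)
          * (Real.exp (p ^ d) * 2 ^ d * y ^ (d - 2)) ^ k := by
        have e : Real.exp (p ^ d) * 2 ^ d * y ^ d
            = y ^ 2 * (Real.exp (p ^ d) * 2 ^ d * y ^ (d - 2)) := by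
          rw [show y ^ d = y ^ 2 * y ^ (d - 2) by rw [← pow_add]; congr 1; omega]
          ring
        rw [sum_const, nsmul_eq_mul, e, mul_pow (y ^ 2), ← mul_assoc]
    _ ≤ Real.exp p ^ k * (Real.exp (p ^ d) * 2 ^ d * y) ^ k := by
        gcongr
        calc y ^ (d - 2) ≤ y ^ 1 := pow_le_pow_of_le_one hy0.le hy1 (by omega)
          _ = y := pow_one y
    _ = _ := by rw [← mul_pow, Real.exp_add]; congr 1; ring

lemma sum_div_two_pow_le (m : ℕ) : ∑ k ∈ range m, (k : ℝ) / 2 ^ k ≤ 2 := by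
  have h : ∑ k ∈ range m, (k : ℝ) / 2 ^ k = 2 - 2 * (m + 1) / 2 ^ m := by
    induction m with
    | zero => norm_num
    | succ m ih => rw [sum_range_succ, ih]; push_cast; field_simp; ring
  rw [h]
  have : (0 : ℝ) ≤ 2 * (m + 1) / 2 ^ m := by positivity
  linarith

/-- The contribution of the vectors with at most `ε n` nonzero coordinates, for a small
constant `ε`. -/
lemma sum_region_sparse (hd : 3 ≤ d) (hn : 0 < n) {C ε : ℝ}
    (hC : C = Real.exp (p ^ d + p) * 2 ^ d) (hε : ε ≤ 1 / 2) (hCε : C * √ε ≤ 1 / 2) :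
    ∑ v ∈ univ.filter (fun v : Fin n → ZMod p => v ≠ 0 ∧ (nz v : ℝ) ≤ ε * n), prob d v
      ≤ 4 * C / √n := by
  have hn0 : (0 : ℝ) < n := by exact_mod_cast hn
  have hC0 : 0 ≤ C := by rw [hC]; positivity
  set s := univ.filter (fun v : Fin n → ZMod p => v ≠ 0 ∧ (nz v : ℝ) ≤ ε * n) with hs
  have hterm : ∀ k ∈ range (n + 1), ∑ v ∈ s.filter (fun v => nz v = k), prob d v
      ≤ 2 * C / √n * (k / 2 ^ k) := by
    intro k _
    rcases (s.filter fun v => nz v = k).eq_empty_or_nonempty with h | ⟨v, hv⟩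
    · rw [h, sum_empty]; positivity
    · have hv1 := (mem_filter.mp hv)
      have hv2 := (mem_filter.mp hv1.1).2
      have hkε : (k : ℝ) ≤ ε * n := by rw [← hv1.2]; exact hv2.2
      have hk : 1 ≤ k := by
        rw [← hv1.2]
        obtain ⟨i, hi⟩ := Function.ne_iff.mp hv2.1
        exact card_pos.mpr ⟨i, by simpa using hi⟩
      have hkn : 2 * k ≤ n := by
        have : (k : ℝ) ≤ 1 / 2 * n := hkε.trans (by gcongr)
        exact_mod_cast (by linarith : (2 : ℝ) * k ≤ n)
      have h1 : ∑ v ∈ s.filter (fun v => nz v = k), prob d v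
          ≤ ∑ v ∈ univ.filter (fun v : Fin n → ZMod p => nz v = k), prob d v :=
        sum_le_sum_of_subset_of_nonneg (fun v hv => by simp [(mem_filter.mp hv).2])
          fun v _ _ => prob_nonneg v
      refine h1.trans ((sum_sparse_le hd hk hkn).trans ?_)
      rw [← hC]
      have h2 : C * √(k / n) ≤ 1 / 2 := by
        refine le_trans ?_ hCε
        gcongr
        rw [div_le_iff₀ hn0]; exact hkε
      obtain ⟨m, rfl⟩ : ∃ m, k = m + 1 := ⟨k - 1, by omega⟩
      have h3 : √(((m + 1 : ℕ) : ℝ) / n) ≤ ((m + 1 : ℕ) : ℝ) / √n := by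
        rw [Real.sqrt_div (by positivity)]
        gcongr
        rw [Real.sqrt_le_left (by positivity)]
        have : (1 : ℝ) ≤ ((m + 1 : ℕ) : ℝ) := by exact_mod_cast hk
        nlinarith
      rw [pow_succ]
      calc (C * √(((m + 1 : ℕ) : ℝ) / n)) ^ m * (C * √(((m + 1 : ℕ) : ℝ) / n))
          ≤ (1 / 2) ^ m * (C * (((m + 1 : ℕ) : ℝ) / √n)) := by gcongr
        _ = _ := by rw [one_div, inv_pow, pow_succ]; field_simp
  rw [← sum_fiberwise_of_maps_to (s := s) (t := range (n + 1)) (g := nz)]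
  · refine (sum_le_sum hterm).trans ?_
    rw [← mul_sum]
    calc _ ≤ 2 * C / √n * 2 := by
          gcongr
          exact sum_div_two_pow_le _
      _ = _ := by ring
  · intro v _
    have := nz_add_cnt v
    exact mem_range.mpr (by omega)

end sparse

/-! ### Vectors far from equidistribution -/

/-- A bound for the exponential growth rate of `prob d v / wt v` (the base of the `n`-th power) when
`v` has empirical frequencies `ν`. -/
noncomputable def rate (d p : ℕ) [NeZero p] (ν : ZMod p → ℝ) : ℝ :=
  gen d p fun j => ν j ^ (((d : ℝ) - 1) / d)

section dense

variable {n d m p : ℕ} [NeZero p]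

/-- The Chernoff bound at `x_j = ν_j ^ ((d - 1) / d)`, for which all but one factor `wt v` cancel. -/
lemma prob_le_rate (hd : 0 < d) (hn : 0 < n) (v : Fin n → ZMod p) :
    prob d v ≤ polyFac n d p * wt v * rate d p (freq v) ^ n := by
  have h := prob_mul_le (d := d) hn v
    (fun j => Real.rpow_nonneg (freq_nonneg v j) (((d : ℝ) - 1) / d))
  have hd' : (d : ℝ) ≠ 0 := by positivity
  have e : (∏ i, freq v (v i) ^ (((d : ℝ) - 1) / d)) ^ d = wt v ^ (d - 1) := by
    rw [Real.finsetProd_rpow _ _ fun i _ => (freq_pos v i).le, ← Real.rpow_natCast,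
      ← Real.rpow_mul (prod_nonneg fun i _ => (freq_pos v i).le), div_mul_cancel₀ _ hd',
      ← Real.rpow_natCast, Nat.cast_pred hd]
    rfl
  rw [e] at h
  have hw := wt_pos v
  refine le_of_mul_le_mul_right (h.trans (le_of_eq ?_)) (pow_pos hw (d - 1))
  rw [← rate]
  obtain ⟨d, rfl⟩ : ∃ k, d = k + 1 := ⟨d - 1, by omega⟩
  simp only [Nat.add_sub_cancel, pow_succ]
  ring

/-- The zero-sum tuples are parametrized by all their coordinates but one. -/
lemma sum_Tset_succAbove (i : Fin (m + 1)) (ν : ZMod p → ℝ) (hν : ∑ j, ν j = 1) :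
    ∑ a ∈ Tset (m + 1) p, ∏ k : Fin m, ν (a (i.succAbove k)) = 1 := by
  calc _ = ∑ b : Fin m → ZMod p, ∏ k, ν (b k) := by
        refine sum_nbij' (fun a k => a (i.succAbove k)) (fun b => i.insertNth (-∑ k, b k) b)
          (by simp) ?_ ?_ (by simp) (by simp)
        · intro b _
          simp [Tset, Fin.sum_univ_succAbove _ i]
        · intro a ha
          have hs := (mem_filter.mp ha).2
          rw [Fin.sum_univ_succAbove _ i] at hs
          have : -∑ k, a (i.succAbove k) = a i := by linear_combination -hs
          simp only [this]
          exact Fin.insertNth_self_removeNth i a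
    _ = 1 := by
        have h2 := Finset.sum_pow' (univ : Finset (ZMod p)) ν m
        rw [Fintype.piFinset_univ] at h2
        rw [← h2, hν, one_pow]

/-- The weight of a tuple in `rate` is the geometric mean of its products with one coordinate left
out. -/
lemma prod_rpow_eq (ν : ZMod p → ℝ) (hν : ∀ j, 0 ≤ ν j) (a : Fin (m + 1) → ZMod p) :
    ∏ i, ν (a i) ^ ((((m + 1 : ℕ) : ℝ) - 1) / (m + 1 : ℕ))
      = ∏ i : Fin (m + 1), (∏ k : Fin m, ν (a (i.succAbove k))) ^ (1 / (m + 1 : ℕ) : ℝ) := by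
  have e1 : ∀ x : ℝ, 0 ≤ x → x ^ ((((m + 1 : ℕ) : ℝ) - 1) / (m + 1 : ℕ))
      = (x ^ (1 / (m + 1 : ℕ) : ℝ)) ^ m := by
    intro x hx
    rw [← Real.rpow_natCast, ← Real.rpow_mul hx]
    congr 1; push_cast; ring
  have e2 : ∀ i : Fin (m + 1), (∏ k : Fin m, ν (a (i.succAbove k))) ^ (1 / (m + 1 : ℕ) : ℝ)
      = ∏ k, if k ≠ i then ν (a k) ^ (1 / (m + 1 : ℕ) : ℝ) else 1 := by
    intro i
    rw [← Real.finsetProd_rpow _ _ fun i _ => hν _, Fin.prod_univ_succAbove _ i]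
    simp
  rw [prod_congr rfl fun i _ => e2 i, prod_comm]
  refine prod_congr rfl fun k _ => ?_
  rw [e1 _ (hν _), prod_ite, prod_const_one, mul_one, prod_const]
  congr 1
  rw [filter_ne, card_erase_of_mem (mem_univ _), card_univ, Fintype.card_fin, Nat.add_sub_cancel]

/-- By the inequality between the geometric and the arithmetic mean, the rate is at most one; it is
smaller than one as soon as, for some zero-sum tuple `a`, the product of the `ν (a k)` with one factor
left out depends on the factor left out. -/
lemma rate_lt_one_of_ne (ν : ZMod p → ℝ) (hν : ∀ j, 0 ≤ ν j) (hs : ∑ j, ν j = 1)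
    (a : Fin (m + 1) → ZMod p) (ha : a ∈ Tset (m + 1) p) (i i' : Fin (m + 1))
    (hne : ∏ k : Fin m, ν (a (i.succAbove k)) ≠ ∏ k : Fin m, ν (a (i'.succAbove k))) :
    rate (m + 1) p ν < 1 := by
  have hm : ((m + 1 : ℕ) : ℝ) ≠ 0 := by positivity
  have hw : ∑ _i : Fin (m + 1), (1 / (m + 1 : ℕ) : ℝ) = 1 := by
    rw [sum_const, card_univ, Fintype.card_fin, nsmul_eq_mul]; field_simp
  have h1 : (1 : ℝ) = ∑ a ∈ Tset (m + 1) p,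
      ∑ i : Fin (m + 1), (1 / (m + 1 : ℕ) : ℝ) * ∏ k : Fin m, ν (a (i.succAbove k)) := by
    rw [sum_comm]
    simp only [← mul_sum, sum_Tset_succAbove _ ν hs, mul_one]
    exact hw.symm
  rw [h1, rate, gen]
  simp only [prod_rpow_eq ν hν]
  refine sum_lt_sum (fun b _ => ?_) ⟨a, ha, ?_⟩
  · exact Real.geom_mean_le_arith_mean_weighted univ _ _ (fun _ _ => by positivity) hw
      fun i _ => prod_nonneg fun _ _ => hν _
  · exact (Real.geom_mean_lt_arith_mean_weighted_iff_of_pos univ _ _ (fun _ _ => by positivity) hw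
      fun i _ => prod_nonneg fun _ _ => hν _).mpr ⟨i, mem_univ _, i', mem_univ _, hne⟩

/-- A distribution charging some `j ≠ 0` and different from the uniform one has rate smaller than
one. In the equality case of the mean inequality the distribution would be invariant under
reflections whose composition is the translation by `d * j`, hence uniform as `p ∤ d`. -/
lemma rate_lt_one [Fact p.Prime] (hd : 3 ≤ d) (hgcd : Nat.gcd p d = 1) (ν : ZMod p → ℝ)
    (hν : ∀ j, 0 ≤ ν j) (hs : ∑ j, ν j = 1) (h0 : ν 0 < 1) (hchi : 0 < chi ν) :
    rate d p ν < 1 := by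
  obtain ⟨m, rfl⟩ : ∃ m, d = m + 3 := ⟨d - 3, by omega⟩
  by_contra hcon
  have key : ∀ (c : Fin (m + 1) → ZMod p), (∀ k, 0 < ν (c k)) → ∀ b,
      ν b = ν (-∑ k, c k - b) := by
    intro c hc b
    by_contra hb
    refine hcon (rate_lt_one_of_ne ν hν hs
      (Fin.cons b (Fin.cons (-∑ k, c k - b) c : Fin (m + 2) → ZMod p)) ?_ 0 1 ?_)
    · refine mem_filter.mpr ⟨mem_univ _, ?_⟩
      rw [Fin.sum_univ_succ, Fin.sum_univ_succ (n := m + 1)]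
      simp only [Fin.cons_zero, Fin.cons_succ]
      ring
    · rw [Fin.prod_univ_succ, Fin.prod_univ_succ (n := m + 1)]
      have hP : ∏ k, ν (c k) ≠ 0 := (prod_pos fun k _ => hc k).ne'
      simpa [hP] using fun h => hb h.symm
  obtain ⟨j, hj0, hj⟩ : ∃ j, j ≠ 0 ∧ 0 < ν j := by
    by_contra hno
    push Not at hno
    rw [sum_eq_single 0 (fun j _ h => le_antisymm (hno j h) (hν j)) (by simp)] at hs
    linarith
  -- `r1` is the reflection `b ↦ -(d-2)j - b`; applied to `j` itself it shows that `-(d-1)j` is charged,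
  -- which gives the second reflection `r2`, namely `b ↦ 2j - b`.
  have r1 := key (fun _ => j) fun _ => hj
  have r2 := key (Fin.cons (-∑ _k : Fin (m + 1), j - j) fun _ => j) (by
    intro k
    refine Fin.cases ?_ (fun k => ?_) k
    · simp only [Fin.cons_zero]; rw [← r1]; exact hj
    · simpa using hj)
  set t : ZMod p := ((m + 3 : ℕ) : ZMod p) * j with ht
  have ht0 : t ≠ 0 := by
    refine mul_ne_zero ?_ hj0
    rw [Ne, ZMod.natCast_eq_zero_iff]
    intro hdvd
    have := Nat.dvd_gcd dvd_rfl hdvd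
    rw [hgcd] at this
    exact (Fact.out : p.Prime).one_lt.ne' (Nat.dvd_one.mp this)
  have htr : ∀ b, ν b = ν (b + t) := by
    intro b
    rw [r1 b, r2]
    congr 1
    simp only [Fin.sum_univ_succ, Fin.cons_zero, Fin.cons_succ, sum_const, card_univ,
      Fintype.card_fin, nsmul_eq_mul, ht]
    push_cast
    ring
  have htr2 : ∀ (k : ℕ) b, ν b = ν (b + k * t) := by
    intro k
    induction k with
    | zero => simp
    | succ k ih => intro b; rw [ih b, htr]; congr 1; push_cast; ring
  have hconst : ∀ b, ν b = ν 0 := by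
    intro b
    rw [htr2 (b * t⁻¹).val 0, ZMod.natCast_zmod_val]
    congr 1; field_simp; ring
  have hp : (p : ℝ) ≠ 0 := by exact_mod_cast NeZero.ne p
  have hunif : ∀ b, ν b = 1 / p := by
    intro b
    rw [sum_congr rfl fun b _ => hconst b, sum_const, card_univ, ZMod.card, nsmul_eq_mul] at hs
    rw [hconst b]; field_simp; linarith
  rw [chi, sum_eq_zero (fun j _ => by rw [hunif j]; ring)] at hchi
  simp at hchi

lemma continuous_rate (hd : 0 < d) : Continuous (rate d p) := by
  unfold rate gen
  refine continuous_finsetSum _ fun a _ => continuous_finsetProd _ fun i _ => ?_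
  refine (continuous_apply (a i)).rpow_const fun _ => Or.inr ?_
  have : (1 : ℝ) ≤ d := by exact_mod_cast hd
  exact div_nonneg (by linarith) (by linarith)

/-- By compactness, the rate is bounded away from one far from the uniform distribution and from
the point mass at zero. -/
lemma exists_rate_bound [Fact p.Prime] (hd : 3 ≤ d) (hgcd : Nat.gcd p d = 1) {ε s : ℝ}
    (hε : 0 < ε) (hs : 0 < s) :
    ∃ ρ : ℝ, 0 ≤ ρ ∧ ρ < 1 ∧ ∀ ν : ZMod p → ℝ, (∀ j, 0 ≤ ν j) → ∑ j, ν j = 1 → ν 0 ≤ 1 - ε →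
      s ≤ chi ν → rate d p ν ≤ ρ := by
  set K : Set (ZMod p → ℝ) :=
    {ν | (∀ j, 0 ≤ ν j) ∧ ∑ j, ν j = 1 ∧ ν 0 ≤ 1 - ε ∧ s ≤ chi ν} with hK
  have hKc : IsCompact K := by
    refine (isCompact_univ_pi fun _ : ZMod p => isCompact_Icc (a := (0 : ℝ)) (b := 1)).of_isClosed_subset
      ?_ ?_
    · have c1 : IsClosed {ν : ZMod p → ℝ | ∀ j, 0 ≤ ν j} := by
        simp only [Set.ofPred_forall]
        exact isClosed_iInter fun j => isClosed_le continuous_const (continuous_apply j)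
      have c2 : IsClosed {ν : ZMod p → ℝ | ∑ j, ν j = 1} :=
        isClosed_eq (by fun_prop) continuous_const
      have c3 : IsClosed {ν : ZMod p → ℝ | ν 0 ≤ 1 - ε} :=
        isClosed_le (by fun_prop) continuous_const
      have c4 : IsClosed {ν : ZMod p → ℝ | s ≤ chi ν} :=
        isClosed_le continuous_const (by unfold chi; fun_prop)
      exact c1.inter (c2.inter (c3.inter c4))
    · intro ν hν j _
      refine ⟨hν.1 j, ?_⟩
      rw [← hν.2.1]
      exact single_le_sum (f := ν) (fun i _ => hν.1 i) (mem_univ j)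
  rcases K.eq_empty_or_nonempty with h | h
  · refine ⟨0, le_rfl, one_pos, fun ν h1 h2 h3 h4 => ?_⟩
    have : ν ∈ K := ⟨h1, h2, h3, h4⟩
    rw [h] at this
    exact absurd this (Set.notMem_empty ν)
  · obtain ⟨ν, hν, hmax⟩ :=
      hKc.exists_isMaxOn h (continuous_rate (d := d) (p := p) (by omega)).continuousOn
    refine ⟨rate d p ν, gen_nonneg fun j => Real.rpow_nonneg (hν.1 j) _,
      rate_lt_one hd hgcd ν hν.1 hν.2.1 (by linarith [hν.2.2.1]) (by linarith [hν.2.2.2]),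
      fun μ h1 h2 h3 h4 => hmax ⟨h1, h2, h3, h4⟩⟩

/-- The contribution of the vectors far from being equidistributed and far from zero. -/
lemma sum_region_dense (hd : 3 ≤ d) (hn : 0 < n) {ε s ρ : ℝ} (hρ : 0 ≤ ρ)
    (h : ∀ ν : ZMod p → ℝ, (∀ j, 0 ≤ ν j) → ∑ j, ν j = 1 → ν 0 ≤ 1 - ε →
      s ≤ chi ν → rate d p ν ≤ ρ) :
    ∑ v ∈ univ.filter (fun v : Fin n → ZMod p => ε * n < nz v ∧ s < chi (freq v)), prob d v
      ≤ polyFac n d p * (n + 1) ^ p * ρ ^ n := by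
  have hn0 : (0 : ℝ) < n := by exact_mod_cast hn
  have hpf := polyFac_pos (n := n) (d := d) (p := p)
  calc _ ≤ ∑ v ∈ univ.filter (fun v : Fin n → ZMod p => ε * n < nz v ∧ s < chi (freq v)),
        polyFac n d p * wt v * ρ ^ n := by
        refine sum_le_sum fun v hv => (prob_le_rate (by omega) hn v).trans ?_
        obtain ⟨h1, h2⟩ := (mem_filter.mp hv).2
        have hr : rate d p (freq v) ≤ ρ := by
          refine h _ (freq_nonneg v) (sum_freq hn v) ?_ h2.le
          have h3 : (nz v : ℝ) + cnt v 0 = n := by exact_mod_cast nz_add_cnt v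
          rw [freq, div_le_iff₀ hn0]; linarith
        have hw := (wt_pos v).le
        have hr0 : 0 ≤ rate d p (freq v) :=
          gen_nonneg fun j => Real.rpow_nonneg (freq_nonneg v j) _
        gcongr
    _ ≤ ∑ v : Fin n → ZMod p, polyFac n d p * wt v * ρ ^ n := by
        refine sum_le_sum_of_subset_of_nonneg (subset_univ _) fun v _ _ => ?_
        have hw := (wt_pos v).le
        positivity
    _ = polyFac n d p * (∑ v : Fin n → ZMod p, wt v) * ρ ^ n := by
        rw [mul_sum, sum_mul]
    _ ≤ _ := by
        have := sum_wt_le (p := p) hn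
        gcongr

end dense

/-! ### Moderate deviations from equidistribution -/

section moderate

variable {n d p : ℕ} [NeZero p]

/-- Fourier expansion of the indicator of the zero-sum tuples. -/
lemma gen_fourier [Fact p.Prime] (x : ZMod p → ℝ) :
    ∑ t : ZMod p, (∑ j, (x j : ℂ) * ZMod.stdAddChar (t * j)) ^ d = ((p * gen d p x : ℝ) : ℂ) := by
  have h1 : ∀ t : ZMod p, (∑ j, (x j : ℂ) * ZMod.stdAddChar (t * j)) ^ d
      = ∑ a : Fin d → ZMod p, (∏ i, (x (a i) : ℂ)) * ZMod.stdAddChar (t * ∑ i, a i) := by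
    intro t
    have h2 := Finset.sum_pow' (univ : Finset (ZMod p))
      (fun j => (x j : ℂ) * ZMod.stdAddChar (t * j)) d
    rw [Fintype.piFinset_univ] at h2
    rw [h2]
    refine sum_congr rfl fun a _ => ?_
    rw [prod_mul_distrib, mul_sum, addChar_sum]
  rw [sum_congr rfl fun t _ => h1 t, sum_comm, gen, Tset, sum_filter, mul_sum]
  push_cast
  refine sum_congr rfl fun a _ => ?_
  rw [← mul_sum, AddChar.sum_mulShift _ (ZMod.isPrimitive_stdAddChar p), ZMod.card]
  split_ifs <;> simp [mul_comm]

lemma norm_char (t : ZMod p) : ‖(ZMod.stdAddChar t : ℂ)‖ = 1 := AddChar.norm_apply _ _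

/-- The nontrivial Fourier coefficients of a vector of total mass one are bounded by its distance
to the uniform distribution. -/
lemma norm_fourier_le [Fact p.Prime] (x : ZMod p → ℝ) {t : ZMod p} (ht : t ≠ 0) :
    ‖∑ j, (x j : ℂ) * ZMod.stdAddChar (t * j)‖ ≤ √(chi x) := by
  have hz : ∑ j : ZMod p, (ZMod.stdAddChar (t * j) : ℂ) = 0 := by
    simp only [mul_comm t]
    rw [AddChar.sum_mulShift _ (ZMod.isPrimitive_stdAddChar p), if_neg ht]; simp
  have h1 : ∑ j, (x j : ℂ) * ZMod.stdAddChar (t * j)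
      = ∑ j, ((x j - 1 / p : ℝ) : ℂ) * ZMod.stdAddChar (t * j) := by
    push_cast
    simp only [sub_mul, sum_sub_distrib, ← mul_sum, hz, mul_zero, sub_zero]
  rw [h1]
  refine (norm_sum_le _ _).trans (Real.le_sqrt_of_sq_le ?_)
  simp only [norm_mul, norm_char, mul_one, Complex.norm_real, Real.norm_eq_abs]
  refine (sq_sum_le_card_mul_sum_sq (s := univ)).trans (le_of_eq ?_)
  simp [chi, ZMod.card]

/-- Each of the nontrivial frequencies contributes at most `√(chi x) ^ d` to the Fourier expansion, and
`d ≥ 3`. -/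
lemma gen_le [Fact p.Prime] (hd : 3 ≤ d) (x : ZMod p → ℝ) (hx : ∑ j, x j = 1)
    (hchi : chi x ≤ 1) : p * gen d p x ≤ 1 + p * (chi x * √(chi x)) := by
  have h0 := chi_nonneg x
  have hs0 := Real.sqrt_nonneg (chi x)
  have hs1 : √(chi x) ≤ 1 := Real.sqrt_le_one.mpr hchi
  have h3 : √(chi x) ^ d ≤ chi x * √(chi x) := by
    calc √(chi x) ^ d ≤ √(chi x) ^ 3 := pow_le_pow_of_le_one hs0 hs1 hd
      _ = _ := by rw [pow_succ, Real.sq_sqrt h0]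
  have h := gen_fourier (d := d) x
  have hnorm : p * gen d p x ≤ ‖((p * gen d p x : ℝ) : ℂ)‖ := by
    rw [Complex.norm_real]; exact le_abs_self _
  refine hnorm.trans ?_
  rw [← h, ← add_sum_erase univ _ (mem_univ (0 : ZMod p))]
  refine (norm_add_le _ _).trans (add_le_add ?_ ?_)
  · simp only [zero_mul, AddChar.map_zero_eq_one, mul_one]
    rw [← Complex.ofReal_sum, hx]; simp
  · refine (norm_sum_le _ _).trans ?_
    calc _ ≤ ∑ t ∈ univ.erase (0 : ZMod p), chi x * √(chi x) := by
          refine sum_le_sum fun t ht => ?_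
          rw [norm_pow]
          exact (pow_le_pow_left₀ (norm_nonneg _) (norm_fourier_le x (ne_of_mem_erase ht)) d).trans h3
      _ ≤ ∑ t : ZMod p, chi x * √(chi x) :=
          sum_le_sum_of_subset_of_nonneg (subset_univ _) fun _ _ _ => by positivity
      _ = _ := by simp [ZMod.card]

/-- With `χ = chi (freq v)` small, the gain `exp (-n χ / (8p))` comes from comparing the Fourier bound
`gen d p (freq v) ≤ p⁻¹ (1 + p χ √χ)` with the entropy deficit `p ^ n * wt v ≥ exp (n χ / (4p))`. -/
lemma prob_moderate_le [Fact p.Prime] (hd : 3 ≤ d) (hn : 0 < n) (v : Fin n → ZMod p)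
    (hs : chi (freq v) ≤ 1 / (64 * p ^ 4)) :
    prob d v ≤ polyFac n d p * wt v * Real.exp (-(n * chi (freq v) / (8 * p))) := by
  have hp1 : 1 ≤ (p : ℝ) := by exact_mod_cast Nat.pos_of_neZero p
  have hp : 0 < (p : ℝ) := by linarith
  set χ := chi (freq v) with hχ
  have h0 : 0 ≤ χ := chi_nonneg _
  have hw := wt_pos v
  have hg0 : 0 ≤ gen d p (freq v) := gen_nonneg (freq_nonneg v)
  have hχ1 : χ ≤ 1 := hs.trans (by
    rw [div_le_one (by positivity)]
    linarith [one_le_pow₀ hp1 (n := 4)])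
  have hsq : √χ ≤ 1 / (8 * p ^ 2) := by
    refine (Real.sqrt_le_left (by positivity)).mpr (hs.trans (le_of_eq ?_))
    field_simp; norm_num
  have h1 : prob d v ≤ polyFac n d p * gen d p (freq v) ^ n := by
    have h := prob_mul_le (d := d) hn v (freq_nonneg v)
    refine le_of_mul_le_mul_right (h.trans (le_of_eq ?_)) (pow_pos hw d)
    rw [wt]; ring
  have h2 : (p : ℝ) ^ n * gen d p (freq v) ^ n ≤ Real.exp (n * χ / (8 * p)) := by
    rw [← mul_pow]
    calc (p * gen d p (freq v)) ^ n ≤ Real.exp (χ / (8 * p)) ^ n := by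
          refine pow_le_pow_left₀ (by positivity) ?_ n
          refine (gen_le hd _ (sum_freq hn v) hχ1).trans ?_
          have : p * (χ * √χ) ≤ χ / (8 * p) := by
            calc p * (χ * √χ) ≤ p * (χ * (1 / (8 * p ^ 2))) := by gcongr
              _ = _ := by field_simp
          linarith [Real.add_one_le_exp (χ / (8 * p))]
      _ = _ := by rw [← Real.exp_nat_mul]; ring_nf
  have h3 := exp_le_wt hn v
  have h4 : gen d p (freq v) ^ n ≤ wt v * Real.exp (-(n * χ / (8 * p))) := by
    have hpn : 0 < (p : ℝ) ^ n := by positivity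
    refine le_of_mul_le_mul_left (h2.trans ?_) hpn
    calc Real.exp (n * χ / (8 * p))
        = Real.exp (n * χ / (4 * p)) * Real.exp (-(n * χ / (8 * p))) := by
          rw [← Real.exp_add]; congr 1; field_simp; ring
      _ ≤ ((p : ℝ) ^ n * wt v) * Real.exp (-(n * χ / (8 * p))) := by gcongr
      _ = _ := by ring
  have hpf := polyFac_pos (n := n) (d := d) (p := p)
  refine h1.trans ?_
  rw [mul_assoc]
  gcongr

/-- The contribution of the vectors at moderate distance from equidistribution. -/
lemma sum_region_moderate [Fact p.Prime] (hd : 3 ≤ d) (hn : 0 < n) (T : ℝ) :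
    ∑ v ∈ univ.filter (fun v : Fin n → ZMod p =>
        T < n * chi (freq v) ∧ chi (freq v) ≤ 1 / (64 * p ^ 4)), prob d v
      ≤ polyFac n d p * (n + 1) ^ p * Real.exp (-(T / (8 * p))) := by
  have hpf := polyFac_pos (n := n) (d := d) (p := p)
  have hp : 0 < (p : ℝ) := by exact_mod_cast Nat.pos_of_neZero p
  calc _ ≤ ∑ v ∈ univ.filter (fun v : Fin n → ZMod p =>
        T < n * chi (freq v) ∧ chi (freq v) ≤ 1 / (64 * p ^ 4)),
        polyFac n d p * wt v * Real.exp (-(T / (8 * p))) := by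
        refine sum_le_sum fun v hv => ?_
        obtain ⟨h1, h2⟩ := (mem_filter.mp hv).2
        refine (prob_moderate_le hd hn v h2).trans ?_
        have hw := (wt_pos v).le
        gcongr
    _ ≤ ∑ v : Fin n → ZMod p, polyFac n d p * wt v * Real.exp (-(T / (8 * p))) := by
        refine sum_le_sum_of_subset_of_nonneg (subset_univ _) fun v _ _ => ?_
        have hw := (wt_pos v).le
        positivity
    _ = polyFac n d p * (∑ v : Fin n → ZMod p, wt v) * Real.exp (-(T / (8 * p))) := by
        rw [mul_sum, sum_mul]
    _ ≤ _ := by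
        have := sum_wt_le (p := p) hn
        gcongr

end moderate

/-! ### Nearly equidistributed vectors -/

/-- The exponential sum `∑ P, ψ (⟨u, A(P) v⟩)`. -/
noncomputable def charSum {n p : ℕ} [NeZero p] (d : ℕ) (u v : Fin n → ZMod p) : ℂ :=
  ∑ P : Equiv.Perm (Fin n × Fin d), ZMod.stdAddChar (∑ z, u z.1 * v (P z).1)

/-- Nonzero vectors whose zero coordinates are a proportion at least `1/p`. -/
def good (n p : ℕ) [NeZero p] : Finset (Fin n → ZMod p) :=
  univ.filter fun u => u ≠ 0 ∧ n ≤ p * cnt u 0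

section uniform

variable {n d p : ℕ} [NeZero p]

/-- The number of configurations killing `v`, by Fourier inversion. -/
lemma killers_fourier [Fact p.Prime] (v : Fin n → ZMod p) :
    ∑ u : Fin n → ZMod p, charSum d u v = (p : ℂ) ^ n * (killers (d := d) v).card := by
  unfold charSum
  rw [sum_comm, killers, card_filter]
  push_cast
  rw [mul_sum]
  refine sum_congr rfl fun P _ => ?_
  have h1 : ∀ u : Fin n → ZMod p, (ZMod.stdAddChar (∑ z : Fin n × Fin d, u z.1 * v (P z).1) : ℂ)
      = ∏ k, ZMod.stdAddChar (u k * ∑ k' : Fin d, v (P (k, k')).1) := by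
    intro u
    rw [Fintype.sum_prod_type, addChar_sum]
    simp only [mul_sum]
  rw [sum_congr rfl fun u _ => h1 u]
  have h2 := Finset.prod_univ_sum (fun _ : Fin n => (univ : Finset (ZMod p)))
    (fun k t => (ZMod.stdAddChar (t * ∑ k' : Fin d, v (P (k, k')).1) : ℂ))
  rw [Fintype.piFinset_univ] at h2
  rw [← h2]
  simp only [AddChar.sum_mulShift _ (ZMod.isPrimitive_stdAddChar p), ZMod.card]
  by_cases h : ∀ k, ∑ k' : Fin d, v (P (k, k')).1 = 0
  · simp [h]
  · rw [if_neg h, mul_zero]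
    push Not at h
    obtain ⟨k, hk⟩ := h
    exact prod_eq_zero (mem_univ k) (by simp [hk])

lemma charSum_add_const (u v : Fin n → ZMod p) (c : ZMod p) :
    charSum d (fun i => u i + c) v = charSum d u v * ZMod.stdAddChar (c * ((d : ZMod p) * ∑ i, v i)) := by
  unfold charSum
  rw [sum_mul]
  refine sum_congr rfl fun P _ => ?_
  rw [← AddChar.map_add_eq_mul]
  congr 1
  have h : ∑ z, v (P z).1 = (d : ZMod p) * ∑ i, v i := by
    rw [Equiv.sum_comp P (fun z => v z.1), Fintype.sum_prod_type, mul_sum]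
    simp
  simp only [add_mul, sum_add_distrib]
  rw [← h, mul_sum]

lemma charSum_zero (v : Fin n → ZMod p) : charSum d 0 v = (n * d).factorial := by
  simp [charSum, Fintype.card_perm]

/-- The vectors `u` proportional to `(1, …, 1)` contribute the main term, supported on the
vectors `v` of sum zero. -/
lemma sum_charSum_const [Fact p.Prime] (hgcd : Nat.gcd p d = 1) (v : Fin n → ZMod p) :
    ∑ c : ZMod p, charSum d (fun _ => c) v
      = (n * d).factorial * (p * if ∑ i, v i = 0 then 1 else 0 : ℝ) := by
  have h1 : ∀ c : ZMod p, charSum d (fun _ : Fin n => c) v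
      = (n * d).factorial * ZMod.stdAddChar (c * ((d : ZMod p) * ∑ i, v i)) := by
    intro c
    have := charSum_add_const (d := d) 0 v c
    simpa [charSum_zero] using this
  have hd0 : (d : ZMod p) ≠ 0 := by
    rw [Ne, ZMod.natCast_eq_zero_iff]
    intro hdvd
    have := Nat.dvd_gcd dvd_rfl hdvd
    rw [hgcd] at this
    exact (Fact.out : p.Prime).one_lt.ne' (Nat.dvd_one.mp this)
  rw [sum_congr rfl fun c _ => h1 c, ← mul_sum,
    AddChar.sum_mulShift _ (ZMod.isPrimitive_stdAddChar p), ZMod.card]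
  simp only [mul_eq_zero, hd0, false_or]
  split_ifs <;> simp

/-- The nonconstant `u` become good after the subtraction of their most frequent value. -/
lemma sum_charSum_nonconst_le [Fact p.Prime] (v : Fin n → ZMod p) :
    ∑ u ∈ univ.filter (fun u : Fin n → ZMod p => ∀ c, u ≠ fun _ => c), ‖charSum d u v‖
      ≤ p * ∑ u ∈ good n p, ‖charSum d u v‖ := by
  have hshift : ∀ (u : Fin n → ZMod p) c, ‖charSum d (fun i => u i + c) v‖ = ‖charSum d u v‖ := by
    intro u c
    rw [charSum_add_const, norm_mul, norm_char, mul_one]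
  have hex : ∀ u : Fin n → ZMod p, ∃ c, n ≤ p * cnt u c := by
    intro u
    by_contra hno
    push Not at hno
    have h1 : ∑ c : ZMod p, p * cnt u c < ∑ c : ZMod p, n :=
      sum_lt_sum_of_nonempty univ_nonempty fun c _ => hno c
    rw [← mul_sum, sum_cnt, sum_const, card_univ, ZMod.card] at h1
    simp at h1
  calc _ ≤ ∑ u ∈ univ.filter (fun u : Fin n → ZMod p => ∀ c, u ≠ fun _ => c),
        ∑ c : ZMod p, if (fun i => u i + c) ∈ good n p then ‖charSum d (fun i => u i + c) v‖ else 0 := by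
        refine sum_le_sum fun u hu => ?_
        have hu' := (mem_filter.mp hu).2
        obtain ⟨c, hc⟩ := hex u
        have hmem : (fun i => u i + -c) ∈ good n p := by
          refine mem_filter.mpr ⟨mem_univ _, fun h0 => hu' c ?_, ?_⟩
          · funext i
            have := congrFun h0 i
            simp only [Pi.zero_apply] at this
            linear_combination this
          · have : cnt (fun i => u i + -c) 0 = cnt u c := by
              unfold cnt
              congr 1
              ext i
              simp [add_neg_eq_zero]
            rw [this]; exact hc
        refine le_trans ?_ (single_le_sum (fun c _ => ?_) (mem_univ (-c)))
        · rw [if_pos hmem, hshift]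
        · positivity
    _ ≤ ∑ u : Fin n → ZMod p, ∑ c : ZMod p,
          if (fun i => u i + c) ∈ good n p then ‖charSum d (fun i => u i + c) v‖ else 0 :=
        sum_le_sum_of_subset_of_nonneg (subset_univ _) fun u _ _ =>
          sum_nonneg fun c _ => by positivity
    _ = ∑ c : ZMod p, ∑ u : Fin n → ZMod p, if u ∈ good n p then ‖charSum d u v‖ else 0 := by
        rw [sum_comm]
        refine sum_congr rfl fun c _ => ?_
        exact Equiv.sum_comp (Equiv.addRight (fun _ : Fin n => c))
          (fun u => if u ∈ good n p then ‖charSum d u v‖ else 0)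
    _ = _ := by simp [ZMod.card, sum_ite_mem]

/-- Fourier inversion with the constant vectors `u` separated from the others, which are replaced by
good ones. -/
lemma prob_fourier_le [Fact p.Prime] (hgcd : Nat.gcd p d = 1) (hn : 0 < n) (v : Fin n → ZMod p) :
    (p : ℝ) ^ n * prob d v ≤ p * (if ∑ i, v i = 0 then 1 else 0)
      + p * ∑ u ∈ good n p, ‖charSum d u v‖ / (n * d).factorial := by
  classical
  have hf : (0 : ℝ) < (n * d).factorial := by positivity
  have h1 := killers_fourier (d := d) v
  rw [← sum_filter_add_sum_filter_not univ (fun u : Fin n → ZMod p => ∀ c, u ≠ fun _ => c)] at h1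
  have h2 : ∑ u ∈ univ.filter (fun u : Fin n → ZMod p => ¬ ∀ c, u ≠ fun _ => c), charSum d u v
      = ∑ c : ZMod p, charSum d (fun _ => c) v := by
    symm
    refine sum_nbij (fun c _ => c) ?_ ?_ ?_ (fun _ _ => rfl)
    · intro c _
      refine mem_filter.mpr ⟨mem_univ _, fun h => h c rfl⟩
    · intro c _ c' _ h
      exact congrFun h ⟨0, hn⟩
    · intro u hu
      have := (mem_filter.mp (mem_coe.mp hu)).2
      push Not at this
      obtain ⟨c, rfl⟩ := this
      exact ⟨c, by simp, rfl⟩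
  rw [h2, sum_charSum_const hgcd] at h1
  have h3 : (p : ℝ) ^ n * (killers (d := d) v).card
      = ‖(p : ℂ) ^ n * (killers (d := d) v).card‖ := by simp
  rw [prob, ← mul_div_assoc, div_le_iff₀ hf, h3, ← h1, ← sum_div, add_comm, add_mul]
  refine (norm_add_le _ _).trans (add_le_add (le_of_eq ?_) ?_)
  · rw [norm_mul, Complex.norm_natCast, Complex.norm_real, Real.norm_of_nonneg, mul_comm]
    positivity
  · rw [mul_assoc, div_mul_cancel₀ _ hf.ne']
    exact (norm_sum_le _ _).trans (sum_charSum_nonconst_le v)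

lemma card_sum_zero (hn : 0 < n) :
    (p : ℝ) * (univ.filter fun v : Fin n → ZMod p => ∑ i, v i = 0).card = (p : ℝ) ^ n := by
  have hp : (p : ℝ) ≠ 0 := by exact_mod_cast NeZero.ne p
  obtain ⟨m, rfl⟩ : ∃ m, n = m + 1 := ⟨n - 1, by omega⟩
  have h := sum_Tset_succAbove (m := m) (p := p) 0 (fun _ => 1 / p)
    (by rw [sum_const, card_univ, ZMod.card, nsmul_eq_mul]; field_simp)
  rw [prod_const, sum_const, card_univ, Fintype.card_fin, nsmul_eq_mul] at h
  rw [Tset, one_div, inv_pow, mul_inv_eq_one₀ (pow_ne_zero _ hp)] at h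
  rw [h, pow_succ]; ring

/-- Bound for the exponential sum at a vector `u` with few nonzero coordinates, by sampling without
replacement along the points `z` with `u z.1 ≠ 0`. -/
lemma charSum_sparse_le [Fact p.Prime] (hn : 0 < n) (hd : 0 < d) {δ : ℝ} (hδ0 : 0 ≤ δ) (hδ1 : δ ≤ 1)
    (hδn : 1 ≤ δ ^ 2 * n) (u v : Fin n → ZMod p) (hv : chi (freq v) ≤ δ ^ 2)
    (hu : 2 * nz u ≤ n) :
    ‖charSum d u v‖ / (n * d).factorial ≤ (2 * (d * nz u : ℕ) * δ) ^ (d * nz u) := by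
  classical
  have hn0 : (0 : ℝ) < n := by exact_mod_cast hn
  have hd1 : (1 : ℝ) ≤ d := by exact_mod_cast hd
  have hcard : Fintype.card (Fin n × Fin d) = n * d := by simp
  set L : Finset (Fin n × Fin d) := univ.filter fun z => u z.1 ≠ 0 with hL
  have hLc : L.card = d * nz u := by
    have : L = (univ.filter fun i => u i ≠ 0) ×ˢ univ := by ext; simp [hL]
    rw [this, card_product]; simp [nz, mul_comm]
  have hfour : ∀ l ∈ L, ‖∑ i : Fin n × Fin d, (ZMod.stdAddChar (u l.1 * v i.1) : ℂ)‖
      ≤ δ * (n * d : ℕ) := by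
    intro l hl
    have hl0 : u l.1 ≠ 0 := (mem_filter.mp hl).2
    have h1 : ∑ i : Fin n × Fin d, (ZMod.stdAddChar (u l.1 * v i.1) : ℂ)
        = (n * d : ℕ) * ∑ j, (freq v j : ℂ) * ZMod.stdAddChar (u l.1 * j) := by
      rw [Fintype.sum_prod_type, ← sum_fiberwise (s := univ) (g := v), mul_sum]
      refine sum_congr rfl fun j _ => ?_
      rw [sum_congr rfl (g := fun _ => (d : ℂ) * ZMod.stdAddChar (u l.1 * j))]
      · rw [sum_const, nsmul_eq_mul, freq, cnt]
        have hnC : (n : ℂ) ≠ 0 := by exact_mod_cast hn.ne'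
        push_cast
        field_simp
      · intro i hi
        simp [(mem_filter.mp hi).2]
    rw [h1, norm_mul, Complex.norm_natCast, mul_comm]
    gcongr
    exact (norm_fourier_le _ hl0).trans ((Real.sqrt_le_left hδ0).mpr hv)
  have hb := sampling_bound hδ0 hδ1 (by
      rw [hcard]; push_cast; rw [← mul_assoc]
      exact one_le_mul_of_one_le_of_one_le hδn hd1) (d * nz u) L L
    (fun l i => (ZMod.stdAddChar (u l.1 * v i.1) : ℂ)) (Subset.refl _) hLc
    (by rw [hcard, mul_comm n d]; calc 2 * (d * nz u) = d * (2 * nz u) := by ring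
          _ ≤ d * n := Nat.mul_le_mul_left d hu)
    (fun l i => (norm_char _).le) (by rw [hcard]; exact hfour)
  have he : charSum d u v = ∑ P : Equiv.Perm (Fin n × Fin d),
      ∏ l ∈ L, (ZMod.stdAddChar (u l.1 * v (P l).1) : ℂ) := by
    unfold charSum
    refine sum_congr rfl fun P _ => ?_
    rw [addChar_sum]
    symm
    refine prod_subset (subset_univ _) fun z _ hz => ?_
    have : u z.1 = 0 := by simpa [hL] using hz
    simp [this]
  rw [← he, Fintype.card_perm, hcard, hLc] at hb
  rw [div_le_iff₀ (by positivity)]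
  refine hb.trans ?_
  gcongr
  rw [mul_pow, mul_pow]
  gcongr
  exact_mod_cast Nat.factorial_le_pow _

/-- Bound for the weight of a good vector with many nonzero coordinates. -/
lemma wt_good_le [Fact p.Prime] (hn : 0 < n) {M : ℝ}
    (hlarge : 3 * d * p * Real.exp (3 * d) * M ≤ n) {u : Fin n → ZMod p} (hu : u ∈ good n p)
    (hk : M < nz u) : wt u ≤ Real.exp (-(3 * d * M)) := by
  have hn0 : (0 : ℝ) < n := by exact_mod_cast hn
  have hp : 0 < (p : ℝ) := by exact_mod_cast Nat.pos_of_neZero p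
  have hsum : (nz u : ℝ) + cnt u 0 = n := by exact_mod_cast nz_add_cnt u
  have hg : (n : ℝ) ≤ p * cnt u 0 := by exact_mod_cast (mem_filter.mp hu).2.2
  have hfr : ∀ j, j ≠ 0 → freq u j ≤ nz u / n := by
    intro j hj
    unfold freq cnt nz
    gcongr with i
    rintro rfl
    exact hj
  have hfr1 : ∀ j, freq u j ≤ 1 := by
    intro j
    rw [← sum_freq hn u]
    exact single_le_sum (f := freq u) (fun i _ => freq_nonneg u i) (mem_univ j)
  have h1 : wt u ≤ (nz u / n : ℝ) ^ nz u := by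
    rw [← prod_spike, wt]
    refine prod_le_prod (fun i _ => freq_nonneg u _) fun i _ => ?_
    unfold spike
    split_ifs with h
    · exact hfr1 _
    · exact hfr _ h
  refine h1.trans ?_
  rcases le_or_gt (nz u / n : ℝ) (Real.exp (-(3 * d))) with h | h
  · calc (nz u / n : ℝ) ^ nz u ≤ Real.exp (-(3 * d)) ^ nz u := by gcongr
      _ = Real.exp (-(3 * d * nz u)) := by rw [← Real.exp_nat_mul]; ring_nf
      _ ≤ _ := by gcongr
  · have h2 : (nz u / n : ℝ) ≤ Real.exp (-(1 / p)) := by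
      refine le_trans ?_ (Real.add_one_le_exp _)
      rw [div_le_iff₀ hn0]
      have : (n : ℝ) / p ≤ cnt u 0 := by rw [div_le_iff₀ hp]; linarith
      calc (nz u : ℝ) ≤ n - n / p := by linarith
        _ = _ := by ring
    calc (nz u / n : ℝ) ^ nz u ≤ Real.exp (-(1 / p)) ^ nz u := by gcongr
      _ = Real.exp (-(nz u / p)) := by rw [← Real.exp_nat_mul]; ring_nf
      _ ≤ _ := by
        gcongr
        rw [le_div_iff₀ hp]
        rw [lt_div_iff₀ hn0] at h
        refine le_trans ?_ h.le
        calc 3 * d * M * p = Real.exp (-(3 * d)) * (3 * d * p * Real.exp (3 * d) * M) := by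
              rw [Real.exp_neg]; field_simp
          _ ≤ _ := by gcongr

/-- Bound for the exponential sum at a good vector with many nonzero coordinates. Parseval bounds its
square by `wt u ^ d` up to factors `exp (d M)`; as `d ≥ 3`, one factor `wt u ≤ exp (-3 d M)` is left
after the square of the `wt u` needed for the summation over `u`. -/
lemma charSum_dense_le [Fact p.Prime] (hd : 3 ≤ d) (hn : 0 < n) {M : ℝ}
    (hlarge : 3 * d * p * Real.exp (3 * d) * M ≤ n) {u v : Fin n → ZMod p} (hu : u ∈ good n p)
    (hk : M < nz u) (hv : n * chi (freq v) ≤ M) :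
    ‖charSum d u v‖ / (n * d).factorial ≤ polyFac n d p * Real.exp (-(d * M)) * wt u := by
  have hf : (0 : ℝ) < (n * d).factorial := by positivity
  have hpf := polyFac_pos (n := n) (d := d) (p := p)
  have hwu := wt_pos u
  have hwv := wt_pos v
  have hw := wt_good_le hn hlarge hu hk
  have hM : 0 ≤ M := le_trans (mul_nonneg (Nat.cast_nonneg n) (chi_nonneg _)) hv
  have hw1 : wt u ≤ 1 := hw.trans (by rw [Real.exp_le_one_iff]; simp; positivity)
  have h := char_perm_sq_le (fun z : Fin n × Fin d => u z.1) (fun z => v z.1)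
  have hcard : Fintype.card (Fin n × Fin d) = n * d := by simp
  rw [hcard] at h
  have hsu := stab_le (d := d) hn u
  have hsv := stab_le (d := d) hn v
  have hpv : ((p : ℝ) ^ n * wt v) ^ d ≤ Real.exp (d * M) := by
    calc ((p : ℝ) ^ n * wt v) ^ d ≤ Real.exp (n * chi (freq v)) ^ d := by
          gcongr; exact wt_le_exp hn v
      _ ≤ Real.exp M ^ d := by gcongr
      _ = _ := by rw [← Real.exp_nat_mul]
  have hwd : wt u ^ d ≤ wt u ^ 2 * Real.exp (-(3 * d * M)) := by
    calc wt u ^ d ≤ wt u ^ 3 := pow_le_pow_of_le_one hwu.le hw1 hd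
      _ = wt u ^ 2 * wt u := by ring
      _ ≤ _ := by gcongr
  rw [div_le_iff₀ hf]
  refine le_of_sq_le_sq ?_ (by positivity)
  calc ‖charSum d u v‖ ^ 2 ≤ (p : ℝ) ^ (n * d) * ((n * d).factorial * polyFac n d p * wt u ^ d)
        * ((n * d).factorial * polyFac n d p * wt v ^ d) := by
        refine h.trans ?_
        gcongr
    _ = ((n * d).factorial * polyFac n d p) ^ 2 * wt u ^ d * ((p : ℝ) ^ n * wt v) ^ d := by
        rw [mul_pow ((p : ℝ) ^ n), ← pow_mul]; ring
    _ ≤ ((n * d).factorial * polyFac n d p) ^ 2 * (wt u ^ 2 * Real.exp (-(3 * d * M)))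
        * Real.exp (d * M) := by gcongr
    _ = ((n * d).factorial * polyFac n d p) ^ 2 * wt u ^ 2 * Real.exp (-(d * M)) ^ 2 := by
        rw [← Real.exp_nat_mul, mul_assoc _ (wt u ^ 2 * _), mul_assoc (wt u ^ 2), ← Real.exp_add,
          ← mul_assoc]
        congr 2; push_cast; ring
    _ = _ := by ring

lemma sum_pow_le {r : ℝ} (hr0 : 0 ≤ r) (hr : r ≤ 1 / 2) (m : ℕ) :
    ∑ k ∈ range m, r ^ (k + 1) ≤ 2 * r := by
  have h : ∑ k ∈ range m, r ^ (k + 1) ≤ 2 * r - 2 * r ^ (m + 1) := by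
    induction m with
    | zero => simp
    | succ m ih =>
      rw [sum_range_succ]
      have : r ^ (m + 1 + 1) ≤ 1 / 2 * r ^ (m + 1) := by
        rw [pow_succ r (m + 1), mul_comm]; gcongr
      linarith
  linarith [pow_nonneg hr0 (m + 1)]

/-- Total contribution of the good `u` with at most `M` nonzero coordinates: a geometric series in
the number of nonzero coordinates. -/
lemma sum_good_sparse_le [Fact p.Prime] (hd : 3 ≤ d) (hn : 0 < n) {δ M r : ℝ} (hδ0 : 0 ≤ δ)
    (hδ1 : δ ≤ 1) (hδn : 1 ≤ δ ^ 2 * n) (hMn : 2 * M ≤ n) (hMδ : 2 * d * M * δ ≤ 1)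
    (hr : r = Real.exp p * n * (2 * d * M * δ) ^ 3) (hr2 : r ≤ 1 / 2)
    (v : Fin n → ZMod p) (hv : chi (freq v) ≤ δ ^ 2) (hM : 0 ≤ M) :
    ∑ u ∈ (good n p).filter (fun u => (nz u : ℝ) ≤ M), ‖charSum d u v‖ / (n * d).factorial
      ≤ 2 * r := by
  have hn0 : (0 : ℝ) < n := by exact_mod_cast hn
  set s := (good n p).filter (fun u => (nz u : ℝ) ≤ M) with hs
  have hr0 : 0 ≤ r := by rw [hr]; positivity
  have hpos : ∀ u ∈ s, 1 ≤ nz u := by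
    intro u hu
    obtain ⟨i, hi⟩ := Function.ne_iff.mp (mem_filter.mp (mem_filter.mp hu).1).2.1
    exact card_pos.mpr ⟨i, by simpa using hi⟩
  have hterm : ∀ k ∈ range n, ∑ u ∈ s.filter (fun u => nz u - 1 = k),
      ‖charSum d u v‖ / (n * d).factorial ≤ r ^ (k + 1) := by
    intro k _
    rcases (s.filter fun u => nz u - 1 = k).eq_empty_or_nonempty with h | ⟨u₀, hu₀⟩
    · rw [h, sum_empty]; positivity
    · have hnz : ∀ u ∈ s.filter (fun u => nz u - 1 = k), nz u = k + 1 := by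
        intro u hu
        have h1 := hpos u (mem_filter.mp hu).1
        have h2 := (mem_filter.mp hu).2
        omega
      have hkM : ((k + 1 : ℕ) : ℝ) ≤ M := by
        rw [← hnz u₀ hu₀]; exact (mem_filter.mp (mem_filter.mp hu₀).1).2
      have hkn : 2 * (k + 1) ≤ n := by
        exact_mod_cast (by linarith : (2 : ℝ) * ((k + 1 : ℕ) : ℝ) ≤ n)
      have hone : ∀ u ∈ s.filter (fun u => nz u - 1 = k),
          ‖charSum d u v‖ / (n * d).factorial ≤ ((2 * d * M * δ) ^ 3) ^ (k + 1) := by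
        intro u hu
        have h1 := charSum_sparse_le hn (by omega : 0 < d) hδ0 hδ1 hδn u v hv
          (by rw [hnz u hu]; exact hkn)
        rw [hnz u hu] at h1
        refine h1.trans ?_
        calc (2 * (d * (k + 1) : ℕ) * δ) ^ (d * (k + 1))
            ≤ (2 * d * M * δ) ^ (d * (k + 1)) := by
              have : (2 * (d * (k + 1) : ℕ) : ℝ) ≤ 2 * d * M := by
                rw [Nat.cast_mul, ← mul_assoc]; gcongr
              gcongr
          _ ≤ (2 * d * M * δ) ^ (3 * (k + 1)) :=
              pow_le_pow_of_le_one (by positivity) hMδ (Nat.mul_le_mul_right _ hd)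
          _ = _ := by rw [pow_mul]
      have hcount : ((s.filter fun u => nz u - 1 = k).card : ℝ) ≤ (Real.exp p * n) ^ (k + 1) := by
        have h1 := card_nz_mul_le (n := n) (p := p) (y := 1 / n) (by positivity) (k + 1)
        have h2 : (s.filter fun u => nz u - 1 = k).card
            ≤ (univ.filter fun u : Fin n → ZMod p => nz u = k + 1).card :=
          card_le_card fun u hu => mem_filter.mpr ⟨mem_univ _, hnz u hu⟩
        rw [one_div, inv_pow, ← div_eq_mul_inv, div_le_iff₀ (by positivity)] at h1
        refine (Nat.cast_le.mpr h2).trans (h1.trans ?_)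
        rw [mul_pow]
        gcongr
        rw [mul_assoc, mul_inv_cancel₀ hn0.ne', mul_one]
        exact le_self_pow₀ (Real.one_le_exp (Nat.cast_nonneg p)) (by omega)
      calc _ ≤ ∑ u ∈ s.filter (fun u => nz u - 1 = k), ((2 * d * M * δ) ^ 3) ^ (k + 1) :=
            sum_le_sum hone
        _ = (s.filter fun u => nz u - 1 = k).card * ((2 * d * M * δ) ^ 3) ^ (k + 1) := by
            rw [sum_const, nsmul_eq_mul]
        _ ≤ (Real.exp p * n) ^ (k + 1) * ((2 * d * M * δ) ^ 3) ^ (k + 1) := by gcongr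
        _ = r ^ (k + 1) := by rw [← mul_pow, hr]
  rw [← sum_fiberwise_of_maps_to (s := s) (t := range n) (g := fun u => nz u - 1)]
  · exact (sum_le_sum hterm).trans (sum_pow_le hr0 hr2 n)
  · intro u _
    have := nz_add_cnt u
    exact mem_range.mpr (by omega)

/-- The contribution of the nearly equidistributed vectors, which is the main term. The number `M` is
the cutoff between the `u` treated by sampling without replacement and by Parseval. -/
lemma sum_region_uniform [Fact p.Prime] (hd : 3 ≤ d) (hgcd : Nat.gcd p d = 1) (hn : 0 < n)
    {δ M r : ℝ} (hδ0 : 0 ≤ δ) (hδ1 : δ ≤ 1) (hδn : 1 ≤ δ ^ 2 * n) (hδM : δ ^ 2 * n ≤ M)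
    (hMn : 2 * M ≤ n) (hMδ : 2 * d * M * δ ≤ 1)
    (hr : r = Real.exp p * n * (2 * d * M * δ) ^ 3) (hr2 : r ≤ 1 / 2)
    (hlarge : 3 * d * p * Real.exp (3 * d) * M ≤ n) :
    ∑ v ∈ univ.filter (fun v : Fin n → ZMod p => chi (freq v) ≤ δ ^ 2), prob d v
      ≤ 1 + p * (2 * r + polyFac n d p * (n + 1) ^ p * Real.exp (-(d * M))) := by
  have hn0 : (0 : ℝ) < n := by exact_mod_cast hn
  have hp : 0 < (p : ℝ) := by exact_mod_cast Nat.pos_of_neZero p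
  have hpf := polyFac_pos (n := n) (d := d) (p := p)
  have hM : 0 ≤ M := by linarith
  set B := 2 * r + polyFac n d p * (n + 1) ^ p * Real.exp (-(d * M)) with hB
  have hr0 : 0 ≤ r := by rw [hr]; positivity
  have hB0 : 0 ≤ B := by positivity
  have hgood : ∀ v : Fin n → ZMod p, chi (freq v) ≤ δ ^ 2 →
      ∑ u ∈ good n p, ‖charSum d u v‖ / (n * d).factorial ≤ B := by
    intro v hv
    rw [← sum_filter_add_sum_filter_not (good n p) (fun u => (nz u : ℝ) ≤ M)]
    refine add_le_add (sum_good_sparse_le hd hn hδ0 hδ1 hδn hMn hMδ hr hr2 v hv hM) ?_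
    calc _ ≤ ∑ u ∈ (good n p).filter (fun u => ¬ (nz u : ℝ) ≤ M),
          polyFac n d p * Real.exp (-(d * M)) * wt u := by
          refine sum_le_sum fun u hu => ?_
          obtain ⟨hu1, hu2⟩ := mem_filter.mp hu
          refine charSum_dense_le hd hn hlarge hu1 (not_le.mp hu2) ?_
          calc n * chi (freq v) ≤ n * δ ^ 2 := by gcongr
            _ ≤ M := by linarith
      _ ≤ ∑ u : Fin n → ZMod p, polyFac n d p * Real.exp (-(d * M)) * wt u :=
          sum_le_sum_of_subset_of_nonneg (subset_univ _) fun u _ _ => by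
            have := (wt_pos u).le
            positivity
      _ = polyFac n d p * Real.exp (-(d * M)) * ∑ u : Fin n → ZMod p, wt u := by rw [mul_sum]
      _ ≤ polyFac n d p * Real.exp (-(d * M)) * (n + 1) ^ p := by
          gcongr; exact sum_wt_le hn
      _ = _ := by ring
  have hpn : (0 : ℝ) < (p : ℝ) ^ n := by positivity
  refine le_of_mul_le_mul_left ?_ hpn
  rw [mul_sum]
  calc _ ≤ ∑ v ∈ univ.filter (fun v : Fin n → ZMod p => chi (freq v) ≤ δ ^ 2),
        ((p : ℝ) * (if ∑ i, v i = 0 then 1 else 0) + p * B) := by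
        refine sum_le_sum fun v hv => (prob_fourier_le hgcd hn v).trans ?_
        have := hgood v (mem_filter.mp hv).2
        gcongr
    _ ≤ ∑ v : Fin n → ZMod p, ((p : ℝ) * (if ∑ i, v i = 0 then 1 else 0) + p * B) :=
        sum_le_sum_of_subset_of_nonneg (subset_univ _) fun v _ _ => by positivity
    _ = (p : ℝ) ^ n * (1 + p * B) := by
        rw [sum_add_distrib, ← mul_sum, sum_boole, card_sum_zero hn, sum_const, card_univ]
        simp [ZMod.card]
        ring

end uniform

/-! ### The first moment of the kernel -/

section assembly

variable {n d p : ℕ} [NeZero p]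

lemma adjMat_mulVec (P : Equiv.Perm (Fin n × Fin d)) (v : Fin n → ZMod p) (k : Fin n) :
    ((adjMat n d P).map (Int.cast : ℤ → ZMod p)).mulVec v k = ∑ k' : Fin d, v (P (k, k')).1 := by
  classical
  rw [← sum_fiberwise (s := univ) (g := fun k' : Fin d => (P (k, k')).1), Matrix.mulVec, dotProduct]
  refine sum_congr rfl fun l _ => ?_
  rw [sum_congr rfl (g := fun _ => v l)]
  · rw [sum_const, nsmul_eq_mul]
    simp [adjMat, Nat.card_eq_fintype_card, Fintype.card_subtype]
  · intro k' hk'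
    rw [(mem_filter.mp hk').2]

/-- The kernel of a singular matrix contains at least `p - 1` nonzero vectors, so the probability
of singularity is at most `1/(p-1)` times the expected number of nonzero kernel vectors. -/
lemma singular_le_sum_prob [Fact p.Prime] :
    (Nat.card {P : Equiv.Perm (Fin n × Fin d) //
        Matrix.det ((adjMat n d P).map (Int.cast : ℤ → ZMod p)) = 0} : ℝ)
      / (Nat.factorial (n * d) : ℝ) * (p - 1)
      ≤ ∑ v ∈ univ.filter (fun v : Fin n → ZMod p => v ≠ 0), prob d v := by
  classical
  have hcard : ∀ P : Equiv.Perm (Fin n × Fin d),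
      Matrix.det ((adjMat n d P).map (Int.cast : ℤ → ZMod p)) = 0 →
      p - 1 ≤ ((univ.filter fun v : Fin n → ZMod p => v ≠ 0).filter fun v => P ∈ killers v).card := by
    intro P hP
    obtain ⟨v, hv0, hv⟩ := Matrix.exists_mulVec_eq_zero_iff.mpr hP
    have h1 : (univ.erase (0 : ZMod p)).card = p - 1 := by
      rw [card_erase_of_mem (mem_univ _), card_univ, ZMod.card]
    rw [← h1]
    refine card_le_card_of_injOn (fun c => c • v) ?_ ?_
    · intro c hc
      refine mem_filter.mpr ⟨mem_filter.mpr ⟨mem_univ _, smul_ne_zero (ne_of_mem_erase hc) hv0⟩, ?_⟩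
      refine mem_filter.mpr ⟨mem_univ _, fun k => ?_⟩
      simp only [Pi.smul_apply, smul_eq_mul]
      rw [← mul_sum, ← adjMat_mulVec, hv, Pi.zero_apply, mul_zero]
    · intro c _ c' _ h
      exact smul_left_injective _ hv0 h
  have hnat : (univ.filter fun P : Equiv.Perm (Fin n × Fin d) =>
      Matrix.det ((adjMat n d P).map (Int.cast : ℤ → ZMod p)) = 0).card * (p - 1)
      ≤ ∑ v ∈ univ.filter (fun v : Fin n → ZMod p => v ≠ 0), (killers (d := d) v).card := by
    calc _ ≤ ∑ P ∈ univ.filter (fun P : Equiv.Perm (Fin n × Fin d) =>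
          Matrix.det ((adjMat n d P).map (Int.cast : ℤ → ZMod p)) = 0),
          ((univ.filter fun v : Fin n → ZMod p => v ≠ 0).filter fun v => P ∈ killers v).card := by
          rw [← smul_eq_mul]
          exact card_nsmul_le_sum _ _ _ fun P hP => hcard P (mem_filter.mp hP).2
      _ ≤ ∑ P : Equiv.Perm (Fin n × Fin d),
          ((univ.filter fun v : Fin n → ZMod p => v ≠ 0).filter fun v => P ∈ killers v).card :=
          sum_le_sum_of_subset (subset_univ _)
      _ = _ := by
          simp only [card_filter _ (univ.filter fun v : Fin n → ZMod p => v ≠ 0)]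
          rw [sum_comm]
          refine sum_congr rfl fun v _ => ?_
          rw [← card_filter]
          congr 1
          ext P
          simp
  have hp1 : ((p - 1 : ℕ) : ℝ) = p - 1 := by
    rw [Nat.cast_pred (Nat.pos_of_neZero p)]
  have hf : (0 : ℝ) < (n * d).factorial := by positivity
  rw [Nat.card_eq_fintype_card, Fintype.card_subtype]
  simp only [prob]
  rw [← sum_div, div_mul_eq_mul_div]
  refine div_le_div_of_nonneg_right ?_ hf.le
  rw [← hp1]
  exact_mod_cast hnat

/-- The expected number of nonzero kernel vectors is covered by the four regions. -/
lemma sum_prob_le_regions {ε s τ : ℝ} :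
    ∑ v ∈ univ.filter (fun v : Fin n → ZMod p => v ≠ 0), prob d v
      ≤ ∑ v ∈ univ.filter (fun v : Fin n → ZMod p => v ≠ 0 ∧ (nz v : ℝ) ≤ ε * n), prob d v
      + ∑ v ∈ univ.filter (fun v : Fin n → ZMod p => ε * n < nz v ∧ s < chi (freq v)), prob d v
      + ∑ v ∈ univ.filter (fun v : Fin n → ZMod p =>
          n * τ < n * chi (freq v) ∧ chi (freq v) ≤ s), prob d v
      + ∑ v ∈ univ.filter (fun v : Fin n → ZMod p => chi (freq v) ≤ τ), prob d v := by
  simp only [sum_filter, ← sum_add_distrib]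
  refine sum_le_sum fun v _ => ?_
  have h0 := prob_nonneg (d := d) v
  rcases Nat.eq_zero_or_pos n with rfl | hn
  · have : v = 0 := Subsingleton.elim _ _
    rw [if_neg (by simpa using this)]
    positivity
  have hn0 : (0 : ℝ) < n := by exact_mod_cast hn
  have h1 : (0 : ℝ) ≤ if v ≠ 0 ∧ (nz v : ℝ) ≤ ε * n then prob d v else 0 := by positivity
  have h2 : (0 : ℝ) ≤ if ε * n < nz v ∧ s < chi (freq v) then prob d v else 0 := by positivity
  have h3 : (0 : ℝ) ≤ if n * τ < n * chi (freq v) ∧ chi (freq v) ≤ s then prob d v else 0 := by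
    positivity
  have h4 : (0 : ℝ) ≤ if chi (freq v) ≤ τ then prob d v else 0 := by positivity
  by_cases hv : v ≠ 0
  · rw [if_pos hv]
    by_cases c1 : (nz v : ℝ) ≤ ε * n
    · rw [if_pos ⟨hv, c1⟩]; linarith
    by_cases c2 : s < chi (freq v)
    · rw [if_pos (⟨not_le.mp c1, c2⟩ : ε * n < nz v ∧ s < chi (freq v))]; linarith
    by_cases c4 : chi (freq v) ≤ τ
    · rw [if_pos c4]; linarith
    · rw [if_pos (⟨by rw [mul_lt_mul_iff_right₀ hn0]; exact not_le.mp c4, not_lt.mp c2⟩ :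
        n * τ < n * chi (freq v) ∧ chi (freq v) ≤ s)]
      linarith
  · rw [if_neg hv]; linarith

lemma polyFac_mul_le (hn : 0 < n) :
    polyFac n d p * (n + 1) ^ p ≤ (Real.exp 1 * (d + 1) * 2) ^ p * (n : ℝ) ^ (2 * p) := by
  have hn1 : (1 : ℝ) ≤ n := by exact_mod_cast hn
  rw [polyFac, pow_mul, ← mul_pow, ← mul_pow]
  refine pow_le_pow_left₀ (by positivity) ?_ p
  calc Real.exp 1 * (n * d + 1) * (n + 1) ≤ Real.exp 1 * (n * d + n) * (n + n) := by gcongr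
    _ = _ := by ring

lemma tendsto_root : Filter.Tendsto (fun n : ℕ => (n : ℝ) ^ (1 / 20 : ℝ)) Filter.atTop Filter.atTop :=
  (tendsto_rpow_atTop (by norm_num)).comp tendsto_natCast_atTop_atTop

lemma root_pow (n : ℕ) : ((n : ℝ) ^ (1 / 20 : ℝ)) ^ 20 = n := by
  rw [← Real.rpow_natCast, ← Real.rpow_mul (Nat.cast_nonneg n)]; norm_num

lemma tendsto_pow_mul_exp (k : ℕ) {c : ℝ} (hc : 0 < c) :
    Filter.Tendsto (fun n : ℕ => (n : ℝ) ^ k * Real.exp (-(((n : ℝ) ^ (1 / 20 : ℝ)) ^ 2 * c)))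
      Filter.atTop (nhds 0) := by
  have h1 : Filter.Tendsto (fun n : ℕ => ((n : ℝ) ^ (1 / 20 : ℝ)) ^ 2 * c)
      Filter.atTop Filter.atTop :=
    ((Filter.tendsto_pow_atTop (by norm_num)).comp tendsto_root).atTop_mul_const hc
  have h2 := ((Real.tendsto_pow_mul_exp_neg_atTop_nhds_zero (10 * k)).comp h1).const_mul
    ((c ^ (10 * k))⁻¹)
  rw [mul_zero] at h2
  refine h2.congr fun n => ?_
  simp only [Function.comp]
  rw [mul_pow, ← pow_mul, show 2 * (10 * k) = 20 * k by ring, pow_mul _ 20 k, root_pow]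
  field_simp

/-- The expected number of nonzero kernel vectors is at most `1 + o(1)`. -/
lemma exists_error_bound [Fact p.Prime] (hd : 3 ≤ d) (hgcd : Nat.gcd p d = 1) :
    ∃ err : ℕ → ℝ, Filter.Tendsto err Filter.atTop (nhds 0) ∧ ∀ᶠ n in Filter.atTop,
      ∑ v ∈ univ.filter (fun v : Fin n → ZMod p => v ≠ 0), prob d v ≤ 1 + err n := by
  have hp1 : 1 ≤ (p : ℝ) := by exact_mod_cast Nat.pos_of_neZero p
  have hp : 0 < (p : ℝ) := by linarith
  have hd0 : 0 < (d : ℝ) := by exact_mod_cast (by omega : 0 < d)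
  obtain ⟨C, hC⟩ : ∃ C, C = Real.exp (p ^ d + p) * 2 ^ d := ⟨_, rfl⟩
  have hC1 : 1 ≤ C := by
    rw [hC]
    exact one_le_mul_of_one_le_of_one_le (Real.one_le_exp (by positivity)) (one_le_pow₀ (by norm_num))
  have hC0 : 0 < C := by linarith
  obtain ⟨ε, hε⟩ : ∃ ε, ε = (1 / (2 * C)) ^ 2 := ⟨_, rfl⟩
  have hεs : √ε = 1 / (2 * C) := by rw [hε]; exact Real.sqrt_sq (by positivity)
  have hε0 : 0 < ε := by rw [hε]; positivity
  have hε2 : ε ≤ 1 / 2 := by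
    have : 1 / (2 * C) ≤ 1 / 2 := by gcongr; linarith
    rw [hε]
    calc (1 / (2 * C)) ^ 2 ≤ (1 / 2 : ℝ) ^ 2 := by gcongr
      _ ≤ 1 / 2 := by norm_num
  have hCε : C * √ε ≤ 1 / 2 := by rw [hεs]; apply le_of_eq; field_simp
  obtain ⟨ρ, hρ0, hρ1, hρ⟩ := exists_rate_bound (p := p) hd hgcd hε0
    (show (0 : ℝ) < 1 / (64 * p ^ 4) by positivity)
  obtain ⟨D, hD⟩ : ∃ D, D = (Real.exp 1 * (d + 1) * 2) ^ p := ⟨_, rfl⟩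
  have hD0 : 0 ≤ D := by rw [hD]; positivity
  -- The scales are `t = n ^ (1/20)`, `δ = t⁻⁹` and `M = t²`: then `n δ² = t²` dominates logarithms, while
  -- `n (M δ)³ = t⁻¹` tends to zero.
  set t : ℕ → ℝ := fun n => (n : ℝ) ^ (1 / 20 : ℝ) with ht
  set T₀ : ℝ := 2 + 2 * d + 16 * Real.exp p * d ^ 3 + 3 * d * p * Real.exp (3 * d) with hT₀
  refine ⟨fun n => 4 * C / √n + D * ((n : ℝ) ^ (2 * p) * ρ ^ n)
    + D * ((n : ℝ) ^ (2 * p) * Real.exp (-(t n ^ 2 * (1 / (8 * p)))))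
    + p * (2 * (8 * Real.exp p * d ^ 3 / t n)
      + D * ((n : ℝ) ^ (2 * p) * Real.exp (-(t n ^ 2 * d)))), ?_, ?_⟩
  · have e1 : Filter.Tendsto (fun n : ℕ => 4 * C / √(n : ℝ)) Filter.atTop (nhds 0) :=
      tendsto_const_nhds.div_atTop (Real.tendsto_sqrt_atTop.comp tendsto_natCast_atTop_atTop)
    have e2 := (tendsto_pow_const_mul_const_pow_of_abs_lt_one (2 * p)
      (show |ρ| < 1 by rwa [abs_of_nonneg hρ0])).const_mul D
    have e3 := (tendsto_pow_mul_exp (2 * p) (show (0 : ℝ) < 1 / (8 * p) by positivity)).const_mul D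
    have e4 : Filter.Tendsto (fun n : ℕ => 8 * Real.exp p * d ^ 3 / t n) Filter.atTop (nhds 0) :=
      tendsto_const_nhds.div_atTop tendsto_root
    have e5 := (tendsto_pow_mul_exp (2 * p) hd0).const_mul D
    have := ((e1.add e2).add e3).add (((e4.const_mul 2).add e5).const_mul (p : ℝ))
    simp only [mul_zero, add_zero] at this
    exact this
  · filter_upwards [Filter.eventually_gt_atTop 0, tendsto_root.eventually_ge_atTop T₀] with n hn htn
    change T₀ ≤ t n at htn
    have hpow : t n ^ 20 = n := root_pow n
    have a1 : 0 ≤ 2 * (d : ℝ) := by positivity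
    have a2 : 0 ≤ 16 * Real.exp p * (d : ℝ) ^ 3 := by positivity
    have a3 : 0 ≤ 3 * d * p * Real.exp (3 * d) := by positivity
    have ht1 : 1 ≤ t n := by linarith
    have ht0 : 0 < t n := by linarith
    have hle : ∀ k ≠ 0, t n ≤ t n ^ k := fun k hk => le_self_pow₀ ht1 hk
    have hpoly : polyFac n d p * (n + 1) ^ p ≤ D * (n : ℝ) ^ (2 * p) := by
      rw [hD]; exact polyFac_mul_le hn
    set δ := (t n ^ 9)⁻¹ with hδ
    have hδn : δ ^ 2 * n = t n ^ 2 := by rw [← hpow, hδ]; field_simp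
    have hr : Real.exp p * n * (2 * d * t n ^ 2 * δ) ^ 3 = 8 * Real.exp p * d ^ 3 / t n := by
      rw [← hpow, hδ]; field_simp; norm_num
    have hsplit : t n ^ 20 = t n ^ 2 * t n ^ 18 := by ring
    have R1 := sum_region_sparse (p := p) hd hn hC hε2 hCε
    have R2 := sum_region_dense (p := p) hd hn hρ0 hρ
    have R3 := sum_region_moderate (p := p) hd hn (n * δ ^ 2)
    have R4 := sum_region_uniform (p := p) (δ := δ) (M := t n ^ 2) hd hgcd hn (by positivity)
      (inv_le_one_of_one_le₀ (one_le_pow₀ ht1)) (by rw [hδn]; exact one_le_pow₀ ht1) hδn.le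
      (by
        rw [← hpow, hsplit, mul_comm]
        gcongr
        linarith [hle 18 (by norm_num)])
      (by
        rw [hδ, ← div_eq_mul_inv, div_le_one (by positivity), show t n ^ 9 = t n ^ 7 * t n ^ 2 by ring]
        gcongr
        linarith [hle 7 (by norm_num)])
      rfl
      (by rw [hr, div_le_iff₀ ht0]; linarith)
      (by
        rw [← hpow, hsplit, mul_comm]
        gcongr
        linarith [hle 18 (by norm_num)])
    rw [hr] at R4
    refine sum_prob_le_regions.trans ((add_le_add (add_le_add (add_le_add R1 R2) R3) R4).trans ?_)
    rw [mul_comm (n : ℝ) (δ ^ 2), hδn]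
    have b1 : polyFac n d p * (n + 1) ^ p * ρ ^ n ≤ D * ((n : ℝ) ^ (2 * p) * ρ ^ n) := by
      rw [← mul_assoc]; gcongr
    have b2 : polyFac n d p * (n + 1) ^ p * Real.exp (-(t n ^ 2 / (8 * p)))
        ≤ D * ((n : ℝ) ^ (2 * p) * Real.exp (-(t n ^ 2 * (1 / (8 * p))))) := by
      rw [← mul_assoc, mul_one_div]; gcongr
    have b3 : (p : ℝ) * (2 * (8 * Real.exp p * d ^ 3 / t n)
          + polyFac n d p * (n + 1) ^ p * Real.exp (-(d * t n ^ 2)))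
        ≤ p * (2 * (8 * Real.exp p * d ^ 3 / t n)
          + D * ((n : ℝ) ^ (2 * p) * Real.exp (-(t n ^ 2 * d)))) := by
      rw [← mul_assoc D, mul_comm (d : ℝ)]; gcongr
    linarith

end assembly

/-- For fixed `d ≥ 3` and a prime `p` with `gcd(p,d) = 1`, the probability
(under the uniform measure on the `(nd)!` permutations of the configuration model) that the
adjacency matrix is singular over `F_p` has limsup at most `1/(p-1)` as `n → ∞`. -/
theorem stmt1 (d p : ℕ) (hd : 3 ≤ d) [Fact p.Prime] (hgcd : Nat.gcd p d = 1) :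
    Filter.limsup
      (fun n : ℕ =>
        (Nat.card {P : Equiv.Perm (Fin n × Fin d) //
            Matrix.det ((adjMat n d P).map (Int.cast : ℤ → ZMod p)) = 0} : ℝ)
          / (Nat.factorial (n * d) : ℝ))
      Filter.atTop ≤ 1 / ((p : ℝ) - 1) := by
  have : NeZero p := ⟨(Fact.out : p.Prime).ne_zero⟩
  have hp2 : (2 : ℝ) ≤ p := by exact_mod_cast (Fact.out : p.Prime).two_le
  have hp1 : (0 : ℝ) < p - 1 := by linarith
  obtain ⟨err, herr, hb⟩ := exists_error_bound (p := p) hd hgcd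
  have hlim : Filter.Tendsto (fun n => (1 + err n) / ((p : ℝ) - 1)) Filter.atTop
      (nhds (1 / ((p : ℝ) - 1))) := by
    simpa using (herr.const_add 1).div_const ((p : ℝ) - 1)
  rw [← hlim.limsup_eq]
  refine Filter.limsup_le_limsup ?_ ?_ hlim.isBoundedUnder_le
  · filter_upwards [hb] with n hn
    rw [le_div_iff₀ hp1]
    exact singular_le_sum_prob.trans hn
  · refine Filter.IsBoundedUnder.isCoboundedUnder_le (Filter.isBoundedUnder_of ⟨0, fun n => ?_⟩)
    positivity
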